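/- arXiv:1701.07912 — 8 statements merged into one kernel-verified Lean document; each statement's English description precedes it below -/
import Mathlib

section
/- Let P(x) = x^n + a_1 x^{n-1} + ... + a_n and Q(x) = b_1 x^{n-1} + b_2 x^{n-2} + ... + b_n be real polynomials (P monic of degree n, Q of degree at most n-1), and let f := P + iQ as a complex polynomial. Suppose f has n_+ roots with positive imaginary part and n_- roots with negative imaginary part, counted with multiplicity, and no real roots (so n_+ + n_- = n). Set d := n - 2·min(n_+, n_-). Then there exist real numbers μ_1 < ν_1 < μ_2 < ν_2 < ... < ν_{d-1} < μ_d such that each μ_i is a root of P and each ν_i is a root of Q. -/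
open Polynomial

open Filter Topology in
lemma hb_angle_one (z : ℂ) (hz : z.im ≠ 0) : ∃ θ : ℝ → ℝ, Continuous θ ∧
    Tendsto θ atTop (𝓝 0) ∧
    Tendsto θ atBot (𝓝 (if 0 < z.im then -Real.pi else Real.pi)) ∧
    ∀ x : ℝ, ∃ r : ℝ, (x : ℂ) - z = r * Complex.exp (θ x * Complex.I) := by
  have hsq : ∀ t : ℝ, Real.sqrt (1 + t ^ 2) ≠ 0 := fun t => by positivity
  have htop : Tendsto (fun x : ℝ => x - z.re) atTop atTop :=
    tendsto_atTop_add_const_right _ _ tendsto_id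
  have hbot : Tendsto (fun x : ℝ => x - z.re) atBot atBot :=
    tendsto_atBot_add_const_right _ _ tendsto_id
  have a1 : Tendsto Real.arctan atTop (𝓝 (Real.pi / 2)) :=
    Real.tendsto_arctan_atTop.mono_right nhdsWithin_le_nhds
  have a2 : Tendsto Real.arctan atBot (𝓝 (-(Real.pi / 2))) :=
    Real.tendsto_arctan_atBot.mono_right nhdsWithin_le_nhds
  rcases lt_or_gt_of_ne hz with h | h
  · refine ⟨fun x => Real.arctan ((x - z.re) / z.im) + Real.pi / 2, ?_, ?_, ?_, ?_⟩
    · exact (Real.continuous_arctan.comp (by fun_prop)).add continuous_const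
    · have := (a2.comp (htop.atTop_div_const_of_neg h)).add_const (Real.pi / 2)
      simpa using this
    · rw [if_neg (by linarith)]
      have hdiv : Tendsto (fun x : ℝ => (x - z.re) / z.im) atBot atTop := by
        have h5 := (tendsto_neg_atBot_atTop.comp hbot).atTop_div_const (neg_pos.mpr h)
        refine h5.congr (fun x => ?_)
        simp only [Function.comp_apply, neg_div_neg_eq]
      have := (a1.comp hdiv).add_const (Real.pi / 2)
      simpa using this
    · intro x
      refine ⟨-z.im * Real.sqrt (1 + ((x - z.re) / z.im) ^ 2), ?_⟩
      have := hsq ((x - z.re) / z.im)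
      apply Complex.ext
      · rw [Complex.re_ofReal_mul, Complex.exp_ofReal_mul_I_re, Real.cos_add_pi_div_two,
          Real.sin_arctan]
        simp only [Complex.sub_re, Complex.ofReal_re]
        generalize Real.sqrt (1 + ((x - z.re) / z.im) ^ 2) = s at *
        field_simp
      · rw [Complex.im_ofReal_mul, Complex.exp_ofReal_mul_I_im, Real.sin_add_pi_div_two,
          Real.cos_arctan]
        simp only [Complex.sub_im, Complex.ofReal_im]
        generalize Real.sqrt (1 + ((x - z.re) / z.im) ^ 2) = s at *
        field_simp
        simp
  · refine ⟨fun x => Real.arctan ((x - z.re) / z.im) - Real.pi / 2, ?_, ?_, ?_, ?_⟩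
    · exact (Real.continuous_arctan.comp (by fun_prop)).sub continuous_const
    · have := (a1.comp (htop.atTop_div_const h)).sub_const (Real.pi / 2)
      simpa using this
    · rw [if_pos h]
      have := (a2.comp (hbot.atBot_div_const h)).sub_const (Real.pi / 2)
      have e : -(Real.pi / 2) - Real.pi / 2 = -Real.pi := by ring
      rw [e] at this
      exact this
    · intro x
      refine ⟨z.im * Real.sqrt (1 + ((x - z.re) / z.im) ^ 2), ?_⟩
      have := hsq ((x - z.re) / z.im)
      apply Complex.ext
      · rw [Complex.re_ofReal_mul, Complex.exp_ofReal_mul_I_re, Real.cos_sub_pi_div_two,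
          Real.sin_arctan]
        simp only [Complex.sub_re, Complex.ofReal_re]
        generalize Real.sqrt (1 + ((x - z.re) / z.im) ^ 2) = s at *
        field_simp
      · rw [Complex.im_ofReal_mul, Complex.exp_ofReal_mul_I_im, Real.sin_sub_pi_div_two,
          Real.cos_arctan]
        simp only [Complex.sub_im, Complex.ofReal_im]
        generalize Real.sqrt (1 + ((x - z.re) / z.im) ^ 2) = s at *
        field_simp
        simp

open Filter Topology in
lemma hb_angle (s : Multiset ℂ) : (∀ z ∈ s, z.im ≠ 0) → ∃ θ : ℝ → ℝ, Continuous θ ∧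
    Tendsto θ atTop (𝓝 0) ∧
    Tendsto θ atBot (𝓝 (Real.pi * ((s.filter (fun z => z.im < 0)).card
      - (s.filter (fun z => 0 < z.im)).card))) ∧
    ∀ x : ℝ, ∃ r : ℝ, (s.map (fun z => (x : ℂ) - z)).prod
      = r * Complex.exp (θ x * Complex.I) := by
  induction s using Multiset.induction with
  | empty =>
    intro _
    refine ⟨fun _ => 0, continuous_const, tendsto_const_nhds, by simp, fun x => ⟨1, by simp⟩⟩
  | cons a s ih =>
    intro h
    obtain ⟨θ, h1, h2, h3, h4⟩ := ih (fun z hz => h z (Multiset.mem_cons_of_mem hz))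
    obtain ⟨φ, g1, g2, g3, g4⟩ := hb_angle_one a (h a (Multiset.mem_cons_self a s))
    refine ⟨fun x => φ x + θ x, g1.add h1, by simpa using g2.add h2, ?_, ?_⟩
    · convert g3.add h3 using 2
      rcases lt_or_gt_of_ne (h a (Multiset.mem_cons_self a s)) with h | h
      · rw [Multiset.filter_cons_of_pos (p := fun z : ℂ => z.im < 0) s h, Multiset.filter_cons_of_neg (p := fun z : ℂ => 0 < z.im) s (by linarith),
          if_neg (by linarith)]
        simp only [Multiset.card_cons]
        push_cast
        ring
      · rw [Multiset.filter_cons_of_neg (p := fun z : ℂ => z.im < 0) s (by linarith), Multiset.filter_cons_of_pos (p := fun z : ℂ => 0 < z.im) s h,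
          if_pos h]
        simp only [Multiset.card_cons]
        push_cast
        ring
    · intro x
      obtain ⟨r, hr⟩ := h4 x
      obtain ⟨q, hq⟩ := g4 x
      refine ⟨q * r, ?_⟩
      rw [Multiset.map_cons, Multiset.prod_cons, hr, hq]
      push_cast
      rw [add_mul, Complex.exp_add]
      ring

open Filter Topology in
/-- Successive hitting points of an increasing sequence of values. -/
lemma hb_hit (g : ℝ → ℝ) (hg : Continuous g) (A B : ℝ)
    (hA : Tendsto g atBot (𝓝 A)) (hB : Tendsto g atTop (𝓝 B))
    (w : ℕ → ℝ) (hw : StrictMono w) (m : ℕ) (h0 : ∀ k, A < w k)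
    (hm : ∀ k, k < m → w k < B) :
    ∃ x : ℕ → ℝ, (∀ k, k < m → g (x k) = w k) ∧ ∀ k, k + 1 < m → x k < x (k + 1) := by
  have step : ∀ (a v : ℝ), g a < v → v < B → ∃ b, a < b ∧ g b = v := by
    intro a v h1 h2
    obtain ⟨c, hc, hac⟩ := ((hB.eventually_const_lt h2).and (eventually_gt_atTop a)).exists
    obtain ⟨b, hb, hbv⟩ := intermediate_value_Icc hac.le hg.continuousOn ⟨h1.le, hc.le⟩
    refine ⟨b, lt_of_le_of_ne hb.1 ?_, hbv⟩
    rintro rfl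
    exact absurd hbv h1.ne
  have step' : ∀ (a v : ℝ), ∃ b, g a < v → v < B → a < b ∧ g b = v := by
    intro a v
    by_cases h : g a < v ∧ v < B
    · obtain ⟨b, hb⟩ := step a v h.1 h.2
      exact ⟨b, fun _ _ => hb⟩
    · exact ⟨0, fun h1 h2 => absurd ⟨h1, h2⟩ h⟩
  choose F hF using step'
  obtain ⟨a, ha⟩ := (hA.eventually_lt_const (h0 0)).exists
  let x : ℕ → ℝ := fun k => Nat.rec (F a (w 0)) (fun k y => F y (w (k + 1))) k
  have hx0 : x 0 = F a (w 0) := rfl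
  have hxs : ∀ k, x (k + 1) = F (x k) (w (k + 1)) := fun k => rfl
  have hx : ∀ k, k < m → g (x k) = w k := by
    intro k
    induction k with
    | zero =>
      intro h
      rw [hx0]
      exact (hF a (w 0) ha (hm 0 h)).2
    | succ k ih =>
      intro h
      rw [hxs]
      exact (hF _ _ (by rw [ih (by omega)]; exact hw (Nat.lt_succ_self k)) (hm _ h)).2
  refine ⟨x, hx, fun k hk => ?_⟩
  rw [hxs]
  exact (hF _ _ (by rw [hx k (by omega)]; exact hw (Nat.lt_succ_self k)) (hm _ hk)).1

open Filter Topology in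
lemma hb_final (g : ℝ → ℝ) (hg : Continuous g) (d : ℕ)
    (hA : Tendsto g atBot (𝓝 (-(Real.pi * d)))) (hB : Tendsto g atTop (𝓝 0)) :
    ∃ μ ν : ℕ → ℝ, (∀ i, i < d → Real.cos (g (μ i)) = 0) ∧
      (∀ i, i < d - 1 → Real.sin (g (ν i)) = 0) ∧
      (∀ i, i + 1 < d → μ i < ν i ∧ ν i < μ (i + 1)) := by
  have hpi := Real.pi_pos
  obtain ⟨x, h1, h2⟩ := hb_hit g hg _ _ hA hB
    (fun k => -(Real.pi * d) + (k + 1) * (Real.pi / 2))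
    (strictMono_nat_of_lt_succ (fun k => by push_cast; linarith)) (2 * d - 1)
    (fun k => by
      have : 0 < ((k : ℝ) + 1) * (Real.pi / 2) := by positivity
      linarith)
    (fun k hk => by
      have : (k : ℝ) + 1 < 2 * d := by
        have : k + 1 < 2 * d := by omega
        exact_mod_cast this
      nlinarith)
  refine ⟨fun i => x (2 * i), fun i => x (2 * i + 1), fun i hi => ?_, fun i hi => ?_,
    fun i hi => ⟨h2 _ (by omega), h2 (2 * i + 1) (by omega)⟩⟩
  · simp only [h1 (2 * i) (by omega)]
    rw [Real.cos_eq_zero_iff]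
    refine ⟨(i : ℤ) - d, ?_⟩
    push_cast
    ring
  · simp only [h1 (2 * i + 1) (by omega)]
    rw [Real.sin_eq_zero_iff]
    refine ⟨(i : ℤ) + 1 - d, ?_⟩
    push_cast
    ring

/-- **Extension of the Hermite–Biehler theorem, strict form** (Theorem 3.2, case `n₀ = 0`).
If `f = P + iQ` (with `P` monic real of degree `n`, `Q` real of degree at most `n-1`)
has `n₊` roots with positive imaginary part, `n₋` roots with negative imaginary part
(counted with multiplicity) and no real roots, then with `d := n - 2·min(n₊,n₋)` there
exist real numbers `μ₁ < ν₁ < μ₂ < ⋯ < ν_{d-1} < μ_d` with each `μᵢ` a root of `P` and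
each `νᵢ` a root of `Q`. -/
theorem hermite_biehler_extension_strict
    (n nplus nminus : ℕ) (P Q : Polynomial ℝ)
    (hP : P.Monic) (hPdeg : P.natDegree = n) (hQdeg : Q.degree < (n : ℕ))
    (f : Polynomial ℂ)
    (hf : f = P.map (algebraMap ℝ ℂ) + Polynomial.C Complex.I * Q.map (algebraMap ℝ ℂ))
    (hplus : (f.roots.filter (fun z => 0 < z.im)).card = nplus)
    (hminus : (f.roots.filter (fun z => z.im < 0)).card = nminus)
    (hreal : ∀ z ∈ f.roots, z.im ≠ 0)
    (hsum : nplus + nminus = n) :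
    ∃ μ ν : ℕ → ℝ,
      (∀ i, i < n - 2 * min nplus nminus → P.IsRoot (μ i)) ∧
      (∀ i, i < n - 2 * min nplus nminus - 1 → Q.IsRoot (ν i)) ∧
      (∀ i, i + 1 < n - 2 * min nplus nminus → μ i < ν i ∧ ν i < μ (i + 1)) := by
  obtain ⟨θ, t1, t2, t3, t4⟩ := hb_angle f.roots hreal
  have hmon : f.Monic := by
    rw [hf]
    refine (hP.map _).add_of_left ?_
    refine lt_of_le_of_lt (degree_C_mul Complex.I_ne_zero).le ?_
    rw [degree_map, degree_map, degree_eq_natDegree hP.ne_zero, hPdeg]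
    exact hQdeg
  have hev : ∀ x : ℝ, ∃ r : ℝ, f.eval (x : ℂ) = r * Complex.exp (θ x * Complex.I) := by
    intro x
    obtain ⟨r, hr⟩ := t4 x
    refine ⟨r, ?_⟩
    rw [← hr, (IsAlgClosed.splits f).eval_eq_prod_roots_of_monic hmon]
  have hev2 : ∀ x : ℝ, f.eval (x : ℂ) = ((P.eval x : ℝ) : ℂ) + Complex.I * ((Q.eval x : ℝ) : ℂ) := by
    intro x
    have e : ∀ R : ℝ[X], (R.map (algebraMap ℝ ℂ)).eval (x : ℂ) = ((R.eval x : ℝ) : ℂ) := by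
      intro R
      rw [eval_map]
      exact eval₂_at_apply (algebraMap ℝ ℂ) x
    rw [hf, eval_add, eval_mul, eval_C, e, e]
  have hPx : ∀ x, Real.cos (θ x) = 0 → P.IsRoot x := by
    intro x hx
    obtain ⟨r, hr⟩ := hev x
    rw [hev2] at hr
    have := congrArg Complex.re hr
    rw [Complex.re_ofReal_mul, Complex.exp_ofReal_mul_I_re, hx] at this
    simpa using this
  have hQx : ∀ x, Real.sin (θ x) = 0 → Q.IsRoot x := by
    intro x hx
    obtain ⟨r, hr⟩ := hev x
    rw [hev2] at hr
    have := congrArg Complex.im hr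
    rw [Complex.im_ofReal_mul, Complex.exp_ofReal_mul_I_im, hx] at this
    simpa using this
  rw [hplus, hminus] at t3
  have hn : (n : ℝ) = nplus + nminus := by rw [← hsum]; push_cast; ring
  rcases le_total nminus nplus with h | h
  · rw [min_eq_right h]
    obtain ⟨μ, ν, h1, h2, h3⟩ := hb_final θ t1 (n - 2 * nminus) (by
      convert t3 using 2
      rw [Nat.cast_sub (by omega), hn]
      push_cast
      ring) t2
    exact ⟨μ, ν, fun i hi => hPx _ (h1 i hi), fun i hi => hQx _ (h2 i hi), h3⟩
  · rw [min_eq_left h]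
    obtain ⟨μ, ν, h1, h2, h3⟩ := hb_final (fun x => -θ x) t1.neg (n - 2 * nplus) (by
      convert t3.neg using 2
      rw [Nat.cast_sub (by omega), hn]
      push_cast
      ring) (by simpa using t2.neg)
    refine ⟨μ, ν, fun i hi => hPx _ ?_, fun i hi => hQx _ ?_, h3⟩
    · simpa using h1 i hi
    · simpa using h2 i hi
end

section
/- Let P(x) = x^n + a_1 x^{n-1} + ... + a_n and Q(x) = b_1 x^{n-1} + ... + b_n be real polynomials, and let f := P + iQ have n_+ roots with positive imaginary part, n_- roots with negative imaginary part, and n_0 < n real roots, counted with multiplicity; set d := n - 2·min(n_+, n_-). Suppose either (a) n_- > n_+ and P(x)/Q(x) → -∞ as x → +∞, or (b) n_- < n_+ and P(x)/Q(x) → +∞ as x → +∞. Then there exist real numbers μ_1 ≤ ν_1 ≤ μ_2 ≤ ... ≤ ν_{d-1} ≤ μ_d ≤ ν_d such that each μ_i is a root of P and each ν_i (including ν_d) is a root of Q, with each value occurring among the μ_i (resp. ν_i) at most its multiplicity as a root of P (resp. Q). If n_0 = 0, then moreover one can take μ_d < ν_d and all inequalities strict. -/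
open Polynomial Filter

/-- continuous argument of a single factor -/
lemma factor_arg (z : ℂ) (hz : z.im ≠ 0) :
    ∃ ψ r : ℝ → ℝ, Continuous ψ ∧ (∀ x, 0 < r x) ∧
      (∀ x : ℝ, (x : ℂ) - z = r x * Complex.exp (ψ x * Complex.I)) ∧
      Tendsto ψ atTop (nhds 0) ∧
      Tendsto ψ atBot (nhds (if z.im < 0 then Real.pi else -Real.pi)) := by
  have hsq : ∀ u : ℝ, 0 < √(1 + u ^ 2) := fun u => Real.sqrt_pos.mpr (by positivity)
  rcases lt_or_gt_of_ne hz with h | h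
  · refine ⟨fun x => Real.arctan ((x - z.re) / z.im) + Real.pi / 2,
      fun x => -z.im * √(1 + ((x - z.re) / z.im) ^ 2), ?_, ?_, ?_, ?_, ?_⟩
    · fun_prop
    · intro x; exact mul_pos (by linarith) (hsq _)
    · intro x
      have := (hsq ((x - z.re) / z.im)).ne'
      rw [Complex.exp_mul_I, ← Complex.ofReal_cos, ← Complex.ofReal_sin, Real.cos_add_pi_div_two,
        Real.sin_add_pi_div_two, Real.sin_arctan, Real.cos_arctan]
      apply Complex.ext <;> simp <;> field_simp
    · have h1 : Tendsto (fun x : ℝ => (x - z.re) / z.im) atTop atBot :=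
        (tendsto_atTop_add_const_right _ (-z.re) tendsto_id).atTop_div_const_of_neg h
      have := ((Real.tendsto_arctan_atBot.mono_right nhdsWithin_le_nhds).comp h1).add_const (Real.pi / 2)
      simpa using this
    · have h1 : Tendsto (fun x : ℝ => (x - z.re) / z.im) atBot atTop :=
        by
        simp only [div_eq_mul_inv]
        exact (tendsto_atBot_add_const_right _ (-z.re) tendsto_id).atBot_mul_const_of_neg
          (inv_lt_zero.mpr h)
      have := ((Real.tendsto_arctan_atTop.mono_right nhdsWithin_le_nhds).comp h1).add_const (Real.pi / 2)
      simpa [h] using this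
  · refine ⟨fun x => Real.arctan ((x - z.re) / z.im) - Real.pi / 2,
      fun x => z.im * √(1 + ((x - z.re) / z.im) ^ 2), ?_, ?_, ?_, ?_, ?_⟩
    · fun_prop
    · intro x; exact mul_pos h (hsq _)
    · intro x
      have := (hsq ((x - z.re) / z.im)).ne'
      rw [Complex.exp_mul_I, ← Complex.ofReal_cos, ← Complex.ofReal_sin, Real.cos_sub_pi_div_two,
        Real.sin_sub_pi_div_two, Real.sin_arctan, Real.cos_arctan]
      apply Complex.ext <;> simp <;> field_simp
    · have h1 : Tendsto (fun x : ℝ => (x - z.re) / z.im) atTop atTop :=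
        (tendsto_atTop_add_const_right _ (-z.re) tendsto_id).atTop_div_const h
      have := ((Real.tendsto_arctan_atTop.mono_right nhdsWithin_le_nhds).comp h1).sub_const (Real.pi / 2)
      simpa using this
    · have h1 : Tendsto (fun x : ℝ => (x - z.re) / z.im) atBot atBot :=
        (tendsto_atBot_add_const_right _ (-z.re) tendsto_id).atBot_div_const h
      have := ((Real.tendsto_arctan_atBot.mono_right nhdsWithin_le_nhds).comp h1).sub_const (Real.pi / 2)
      rw [if_neg (by linarith)]
      have e : -Real.pi = -(Real.pi / 2) - Real.pi / 2 := by ring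
      rw [e]; exact this

lemma prod_arg (S : Multiset ℂ) (hS : ∀ z ∈ S, z.im ≠ 0) :
    ∃ ψ r : ℝ → ℝ, Continuous ψ ∧ (∀ x, 0 < r x) ∧
      (∀ x : ℝ, (S.map (fun z => (x : ℂ) - z)).prod = r x * Complex.exp (ψ x * Complex.I)) ∧
      Tendsto ψ atTop (nhds 0) ∧
      Tendsto ψ atBot (nhds (((S.filter (fun z => z.im < 0)).card : ℝ) * Real.pi
        - ((S.filter (fun z => 0 < z.im)).card : ℝ) * Real.pi)) := by
  induction S using Multiset.induction_on with
  | empty =>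
    exact ⟨fun _ => 0, fun _ => 1, continuous_const, fun _ => one_pos, by simp,
      tendsto_const_nhds, by simp⟩
  | cons z S ih =>
    obtain ⟨ψ, r, h1, h2, h3, h4, h5⟩ := ih (fun w hw => hS w (Multiset.mem_cons_of_mem hw))
    have hz := hS z (Multiset.mem_cons_self z S)
    obtain ⟨φ, s, g1, g2, g3, g4, g5⟩ := factor_arg z hz
    refine ⟨fun x => φ x + ψ x, fun x => s x * r x, g1.add h1, fun x => mul_pos (g2 x) (h2 x), ?_,
      by simpa using g4.add h4, ?_⟩
    · intro x
      rw [Multiset.map_cons, Multiset.prod_cons, h3, g3]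
      push_cast
      rw [add_mul, Complex.exp_add]; ring
    · convert g5.add h5 using 2
      rcases lt_or_gt_of_ne hz with h | h
      · simp [Multiset.filter_cons, h, not_lt.mpr h.le]; ring
      · simp [Multiset.filter_cons, h, not_lt.mpr h.le]; ring

lemma first_hit (ψ : ℝ → ℝ) (hψ : Continuous ψ) (L X : ℝ) (hX : ψ X < 0)
    (hL : Tendsto ψ atBot (nhds L)) :
    ∃ s : ℝ → ℝ, (∀ c, 0 ≤ c → c < L → ψ (s c) = c) ∧
      (∀ c c', 0 ≤ c → c < c' → c' < L → s c' < s c) := by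
  have hne : ∀ c, 0 ≤ c → {x | ψ x ≤ c}.Nonempty := fun c hc => ⟨X, by simp; linarith⟩
  have hbd : ∀ c, c < L → ∃ m, ∀ x, ψ x ≤ c → m < x := by
    intro c hc
    obtain ⟨m, hm⟩ := eventually_atBot.mp (hL.eventually (lt_mem_nhds hc))
    exact ⟨m, fun x hx => by by_contra hh; exact absurd (hm x (not_lt.mp hh)) (not_lt.mpr hx)⟩
  have hbdd : ∀ c, c < L → BddBelow {x | ψ x ≤ c} := by
    intro c hc
    obtain ⟨m, hm⟩ := hbd c hc
    exact ⟨m, fun x hx => (hm x hx).le⟩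
  have hmem : ∀ c, 0 ≤ c → c < L → ψ (sInf {x | ψ x ≤ c}) ≤ c := fun c h0 hc =>
    (isClosed_le hψ continuous_const).csInf_mem (hne c h0) (hbdd c hc)
  have heq : ∀ c, 0 ≤ c → c < L → ψ (sInf {x | ψ x ≤ c}) = c := by
    intro c h0 hc
    refine le_antisymm (hmem c h0 hc) ?_
    by_contra hlt
    push Not at hlt
    have : ∀ᶠ x in nhds (sInf {x | ψ x ≤ c}), ψ x < c :=
      hψ.continuousAt.eventually (gt_mem_nhds hlt)
    obtain ⟨ε, he, hball⟩ := Metric.eventually_nhds_iff.mp this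
    have h1 := @hball (sInf {x | ψ x ≤ c} - ε / 2) (by
      rw [Real.dist_eq, abs_lt]; constructor <;> linarith)
    have := csInf_le (hbdd c hc) (show _ ∈ {x | ψ x ≤ c} from h1.le)
    linarith
  refine ⟨fun c => sInf {x | ψ x ≤ c}, heq, fun c c' h0 hcc hc' => ?_⟩
  refine lt_of_le_of_ne (csInf_le_csInf (hbdd c' hc') (hne c h0) ?_) ?_
  · intro x hx; exact le_trans hx hcc.le
  · intro h
    have a1 := heq c h0 (hcc.trans hc')
    have a2 := heq c' (h0.trans hcc.le) hc'
    dsimp only at h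
    rw [h] at a2
    linarith

lemma core_neg (S : Multiset ℂ) (hS : ∀ z ∈ S, z.im ≠ 0) (p q : ℝ[X]) (d : ℕ)
    (h : ∀ x : ℝ, ((p.eval x : ℝ) : ℂ) + Complex.I * ((q.eval x : ℝ) : ℂ)
      = (S.map (fun z => (x : ℂ) - z)).prod)
    (hd : (S.filter (fun z => 0 < z.im)).card + d = (S.filter (fun z => z.im < 0)).card)
    (hlim : Tendsto (fun x : ℝ => p.eval x / q.eval x) atTop atBot) :
    ∃ μ ν : ℕ → ℝ, (∀ i, i < d → p.IsRoot (μ i)) ∧ (∀ i, i < d → q.IsRoot (ν i)) ∧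
      (∀ i, i < d → μ i < ν i) ∧ (∀ i, i + 1 < d → ν i < μ (i + 1)) := by
  obtain ⟨ψ, r, h1, h2, h3, h4, h5⟩ := prod_arg S hS
  have hpq : ∀ x : ℝ, p.eval x = r x * Real.cos (ψ x) ∧ q.eval x = r x * Real.sin (ψ x) := by
    intro x
    have e := (h x).trans (h3 x)
    rw [Complex.exp_mul_I, ← Complex.ofReal_cos, ← Complex.ofReal_sin] at e
    have e1 := congrArg Complex.re e
    have e2 := congrArg Complex.im e
    simp at e1 e2
    exact ⟨e1, e2⟩
  have hX : ∃ X, ψ X < 0 := by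
    have hpi := Real.pi_pos
    have ev1 := hlim.eventually (eventually_lt_atBot 0)
    have ev2 := h4.eventually (gt_mem_nhds (show (0:ℝ) < Real.pi / 2 by linarith))
    obtain ⟨X, hx1, hx2⟩ := (ev1.and ev2).exists
    refine ⟨X, ?_⟩
    by_contra hneg
    push Not at hneg
    have c1 : 0 ≤ p.eval X := by
      rw [(hpq X).1]
      exact mul_nonneg (h2 X).le (Real.cos_nonneg_of_mem_Icc ⟨by linarith, hx2.le⟩)
    have c2 : 0 ≤ q.eval X := by
      rw [(hpq X).2]
      exact mul_nonneg (h2 X).le (Real.sin_nonneg_of_nonneg_of_le_pi hneg (by linarith))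
    exact absurd hx1 (not_lt.mpr (div_nonneg c1 c2))
  obtain ⟨X, hX⟩ := hX
  have hL : Tendsto ψ atBot (nhds (d * Real.pi)) := by
    convert h5 using 2
    rw [← hd]; push_cast; ring
  obtain ⟨s, s1, s2⟩ := first_hit ψ h1 _ X hX hL
  have hpi := Real.pi_pos
  have key : ∀ i, i < d → (i : ℝ) + 1 ≤ d := fun i hi => by exact_mod_cast hi
  refine ⟨fun i => s ((d - i - 1) * Real.pi + Real.pi / 2), fun i => s ((d - i - 1) * Real.pi),
    ?_, ?_, ?_, ?_⟩
  · intro i hi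
    have := key i hi
    have h0 : 0 ≤ (d - i - 1 : ℝ) * Real.pi := mul_nonneg (by linarith) hpi.le
    have hi0 : 0 ≤ (i : ℝ) * Real.pi := by positivity
    rw [IsRoot.def, (hpq _).1, s1 _ (by linarith) (by linarith), Real.cos_add_pi_div_two]
    have : ((d - i - 1 : ℝ)) = ((d - i - 1 : ℤ) : ℝ) := by push_cast; ring
    rw [this, Real.sin_int_mul_pi]; simp
  · intro i hi
    have := key i hi
    have h0 : 0 ≤ (d - i - 1 : ℝ) * Real.pi := mul_nonneg (by linarith) hpi.le
    have hi0 : 0 ≤ (i : ℝ) * Real.pi := by positivity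
    rw [IsRoot.def, (hpq _).2, s1 _ (by linarith) (by linarith)]
    have : ((d - i - 1 : ℝ)) = ((d - i - 1 : ℤ) : ℝ) := by push_cast; ring
    rw [this, Real.sin_int_mul_pi]; simp
  · intro i hi
    have := key i hi
    have h0 : 0 ≤ (d - i - 1 : ℝ) * Real.pi := mul_nonneg (by linarith) hpi.le
    have hi0 : 0 ≤ (i : ℝ) * Real.pi := by positivity
    exact s2 _ _ h0 (by linarith) (by linarith)
  · intro i hi
    have := key _ hi
    push_cast at this ⊢
    have h0 : 0 ≤ (d - (i + 1) - 1 : ℝ) * Real.pi := mul_nonneg (by linarith) hpi.le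
    have hi0 : 0 ≤ (i : ℝ) * Real.pi := by positivity
    exact s2 _ _ (by linarith) (by linarith) (by linarith)

lemma core_pos (S : Multiset ℂ) (hS : ∀ z ∈ S, z.im ≠ 0) (p q : ℝ[X]) (d : ℕ)
    (h : ∀ x : ℝ, ((p.eval x : ℝ) : ℂ) + Complex.I * ((q.eval x : ℝ) : ℂ)
      = (S.map (fun z => (x : ℂ) - z)).prod)
    (hd : (S.filter (fun z => z.im < 0)).card + d = (S.filter (fun z => 0 < z.im)).card)
    (hlim : Tendsto (fun x : ℝ => p.eval x / q.eval x) atTop atTop) :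
    ∃ μ ν : ℕ → ℝ, (∀ i, i < d → p.IsRoot (μ i)) ∧ (∀ i, i < d → q.IsRoot (ν i)) ∧
      (∀ i, i < d → μ i < ν i) ∧ (∀ i, i + 1 < d → ν i < μ (i + 1)) := by
  obtain ⟨μ, ν, a1, a2, a3, a4⟩ := core_neg (S.map (starRingEnd ℂ)) (by
      intro z hz
      obtain ⟨w, hw, rfl⟩ := Multiset.mem_map.mp hz
      simpa using hS w hw) p (-q) d (by
      intro x
      have := congrArg (starRingEnd ℂ) (h x)
      rw [map_multiset_prod, Multiset.map_map] at this
      rw [Multiset.map_map]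
      simp only [Function.comp_def, map_sub, map_add, map_mul, Complex.conj_ofReal,
        Complex.conj_I] at this ⊢
      rw [← this]; simp) (by
      rw [Multiset.filter_map, Multiset.filter_map, Multiset.card_map, Multiset.card_map]
      simpa [Function.comp_def] using hd) (by
      have := tendsto_neg_atTop_atBot.comp hlim
      simpa [Function.comp_def, div_neg] using this)
  exact ⟨μ, ν, a1, fun i hi => by simpa using a2 i hi, a3, a4⟩

/-- common real factor -/
lemma split_real (T : Multiset ℝ) (G : ℂ[X]) : ∀ (P Q : ℝ[X]),
    P.map (algebraMap ℝ ℂ) + C Complex.I * Q.map (algebraMap ℝ ℂ) =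
      ((T.map (fun r => X - C r)).prod).map (algebraMap ℝ ℂ) * G →
    ∃ p q : ℝ[X], P = (T.map (fun r => X - C r)).prod * p ∧
      Q = (T.map (fun r => X - C r)).prod * q ∧
      p.map (algebraMap ℝ ℂ) + C Complex.I * q.map (algebraMap ℝ ℂ) = G := by
  induction T using Multiset.induction_on with
  | empty => intro P Q h; exact ⟨P, Q, by simp, by simp, by simpa using h⟩
  | cons r T ih =>
    intro P Q h
    rw [Multiset.map_cons, Multiset.prod_cons] at h ⊢
    have ev := congrArg (Polynomial.eval (r : ℂ)) h
    have e0 : ∀ A : ℝ[X], (A.map (algebraMap ℝ ℂ)).eval (r : ℂ) = ((A.eval r : ℝ) : ℂ) := by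
      intro A
      exact Polynomial.eval_map_algebraMap A (r : ℂ) |>.trans (Polynomial.aeval_algebraMap_apply_eq_algebraMap_eval r A)
    simp only [eval_add, eval_mul, eval_C, e0] at ev
    simp at ev
    have e1 := congrArg Complex.re ev
    have e2 := congrArg Complex.im ev
    simp at e1 e2
    obtain ⟨P', rfl⟩ := dvd_iff_isRoot.mpr (show P.IsRoot r from e1)
    obtain ⟨Q', rfl⟩ := dvd_iff_isRoot.mpr (show Q.IsRoot r from e2)
    obtain ⟨p, q, b1, b2, b3⟩ := ih P' Q' (by
      have hne : ((X - C r : ℝ[X]).map (algebraMap ℝ ℂ)) ≠ 0 :=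
        ((monic_X_sub_C r).map _).ne_zero
      apply mul_left_cancel₀ hne
      simp only [Polynomial.map_mul] at h ⊢
      linear_combination h)
    exact ⟨p, q, by rw [b1, mul_assoc], by rw [b2, mul_assoc], b3⟩

lemma list_card_filter (l : List ℝ) (x : ℝ) :
    ((Finset.range l.length).filter (fun i => l.getD i 0 = x)).card = l.count x := by
  induction l with
  | nil => simp
  | cons a l ih =>
    rw [List.length_cons, Finset.range_add_one', Finset.filter_insert, Finset.filter_map,
      List.count_cons]
    by_cases h : a = x
    · simp [h] at ih ⊢
      rw [← ih]; rfl
    · simp [h] at ih ⊢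
      rw [← ih]; rfl

lemma list_sorted_le (l : List ℝ) (hl : l.Pairwise (· ≤ ·)) (t : ℝ) : ∀ i, i < l.length →
    (l.getD i 0 ≤ t ↔ i + 1 ≤ l.countP (fun y => y ≤ t)) := by
  induction l with
  | nil => simp
  | cons a l ih =>
    intro i hi
    rw [List.pairwise_cons] at hl
    by_cases h : a ≤ t
    · rw [List.countP_cons_of_pos (by simpa using h)]
      cases i with
      | zero => simpa using h
      | succ i =>
        have := ih hl.2 i (by simpa using hi)
        simp only [List.getD_cons_succ, this]
        omega
    · have hall : ∀ y ∈ a :: l, t < y := by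
        intro y hy
        rcases List.mem_cons.mp hy with rfl | hy
        · exact not_le.mp h
        · exact lt_of_lt_of_le (not_le.mp h) (hl.1 y hy)
      have h0 : (a :: l).countP (fun y => y ≤ t) = 0 := by
        rw [List.countP_eq_zero]
        intro y hy
        simpa using hall y hy
      rw [h0]
      have hm : (a :: l).getD i 0 ∈ a :: l := by
        rw [List.getD_eq_getElem _ _ hi]; exact List.getElem_mem hi
      have := hall _ hm
      constructor
      · intro h'; linarith
      · intro h'; omega

/-- sorted enumeration of a multiset -/
lemma enum_multiset (A : Multiset ℝ) :
    ∃ μ : ℕ → ℝ, (∀ i, i < A.card → μ i ∈ A) ∧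
      (∀ x, ((Finset.range A.card).filter (fun i => μ i = x)).card = A.count x) ∧
      (∀ i t, i < A.card → (μ i ≤ t ↔ i + 1 ≤ A.countP (fun y => y ≤ t))) := by
  have hs : ((A.sort (· ≤ ·) : List ℝ) : Multiset ℝ) = A := Multiset.sort_eq A _
  have hp : (A.sort (· ≤ ·)).Pairwise (· ≤ ·) := Multiset.pairwise_sort A _
  generalize A.sort (· ≤ ·) = l at hs hp
  subst hs
  refine ⟨fun i => l.getD i 0, ?_, ?_, ?_⟩
  · intro i hi
    rw [Multiset.coe_card] at hi
    rw [Multiset.mem_coe]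
    dsimp only
    rw [List.getD_eq_getElem _ _ hi]; exact List.getElem_mem hi
  · intro x
    simpa using list_card_filter l x
  · intro i t hi
    simpa using list_sorted_le l hp t i (by simpa using hi)

lemma chain_lt (d : ℕ) (μ ν : ℕ → ℝ) (h1 : ∀ i, i < d → μ i < ν i)
    (h2 : ∀ i, i + 1 < d → ν i < μ (i + 1)) :
    ∀ i j, i < j → j < d → ν i < μ j ∧ μ i < μ j ∧ ν i < ν j := by
  intro i j hij
  induction j, hij using Nat.le_induction with
  | base =>
    intro hj
    have a := h1 i (by omega)
    have b := h2 i hj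
    have c := h1 _ hj
    exact ⟨b, a.trans b, b.trans c⟩
  | succ j hj ih =>
    intro hjd
    obtain ⟨b1, b2, b3⟩ := ih (by omega)
    have a := h1 j (by omega)
    have b := h2 j hjd
    have c := h1 _ hjd
    exact ⟨by linarith, by linarith, by linarith⟩

lemma merge_chain (T : Multiset ℝ) (p q : ℝ[X]) (hp : p ≠ 0) (hq : q ≠ 0) (d : ℕ) (μ ν : ℕ → ℝ)
    (r1 : ∀ i, i < d → p.IsRoot (μ i)) (r2 : ∀ i, i < d → q.IsRoot (ν i))
    (h1 : ∀ i, i < d → μ i < ν i) (h2 : ∀ i, i + 1 < d → ν i < μ (i + 1)) :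
    ∃ A B : Multiset ℝ, A.card = T.card + d ∧ B.card = T.card + d ∧
      A ≤ ((T.map (fun r => X - C r)).prod * p).roots ∧
      B ≤ ((T.map (fun r => X - C r)).prod * q).roots ∧
      (∀ t, B.countP (fun y => y ≤ t) ≤ A.countP (fun y => y ≤ t)) ∧
      (∀ t, A.countP (fun y => y ≤ t) ≤ B.countP (fun y => y ≤ t) + 1) := by
  have hR : (T.map (fun r => X - C r)).prod ≠ 0 :=
    (monic_multiset_prod_of_monic _ _ (fun r _ => monic_X_sub_C r)).ne_zero
  have ch := chain_lt d μ ν h1 h2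
  have key : ∀ (g : ℝ[X]) (κ : ℕ → ℝ), g ≠ 0 → (∀ i, i < d → g.IsRoot (κ i)) →
      (∀ i j, i < j → j < d → κ i < κ j) →
      T + (Multiset.range d).map κ ≤ ((T.map (fun r => X - C r)).prod * g).roots := by
    intro g κ hg hroot hmono
    rw [roots_mul (mul_ne_zero hR hg), roots_multiset_prod_X_sub_C]
    refine add_le_add_right ?_ _
    rw [Multiset.le_iff_subset]
    · intro x hx
      obtain ⟨i, hi, rfl⟩ := Multiset.mem_map.mp hx
      exact (mem_roots hg).mpr (hroot i (Multiset.mem_range.mp hi))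
    · refine Multiset.Nodup.map_on ?_ (Multiset.nodup_range d)
      intro i hi j hj hij
      rw [Multiset.mem_range] at hi hj
      rcases lt_trichotomy i j with h | h | h
      · exact absurd hij (hmono i j h hj).ne
      · exact h
      · exact absurd hij (hmono j i h hi).ne'
  have cnt : ∀ (κ : ℕ → ℝ) t, (T + (Multiset.range d).map κ).countP (fun y => y ≤ t) =
      T.countP (fun y => y ≤ t) + ((Finset.range d).filter (fun i => κ i ≤ t)).card := by
    intro κ t
    rw [Multiset.countP_add, Multiset.countP_map]; rfl
  refine ⟨T + (Multiset.range d).map μ, T + (Multiset.range d).map ν, by simp, by simp,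
    key p μ hp r1 (fun i j a b => (ch i j a b).2.1), key q ν hq r2 (fun i j a b => (ch i j a b).2.2),
    ?_, ?_⟩
  · intro t
    rw [cnt, cnt]
    refine Nat.add_le_add_left (Finset.card_le_card ?_) _
    intro i hi
    rw [Finset.mem_filter, Finset.mem_range] at hi ⊢
    exact ⟨hi.1, (h1 i hi.1).le.trans hi.2⟩
  · intro t
    rw [cnt, cnt, add_assoc]
    refine Nat.add_le_add_left ?_ _
    calc _ ≤ (insert 0 (((Finset.range d).filter (fun i => ν i ≤ t)).image Nat.succ)).card := by
          refine Finset.card_le_card ?_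
          intro i hi
          rw [Finset.mem_filter, Finset.mem_range] at hi
          cases i with
          | zero => simp
          | succ i =>
            refine Finset.mem_insert_of_mem (Finset.mem_image_of_mem _ ?_)
            rw [Finset.mem_filter, Finset.mem_range]
            exact ⟨by omega, (h2 i hi.1).le.trans hi.2⟩
      _ ≤ _ := (Finset.card_insert_le _ _).trans (Nat.add_le_add_right Finset.card_image_le _)

/-- **Observation 3.6(ii)**.  Under the hypotheses of the extended Hermite–Biehler theorem
for `f = P + iQ`, if `n₋ > n₊` and `P(x)/Q(x) → -∞` as `x → +∞`, or `n₋ < n₊` and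
`P(x)/Q(x) → +∞` as `x → +∞`, then there is an additional real root `ν_d ≥ μ_d` of `Q`,
giving a chain `μ₁ ≤ ν₁ ≤ μ₂ ≤ ⋯ ≤ ν_{d-1} ≤ μ_d ≤ ν_d`; if `n₀ = 0` all inequalities
can be taken strict. -/
theorem extra_root_at_top
    (n nplus nminus nzero : ℕ) (P Q : Polynomial ℝ)
    (hP : P.Monic) (hPdeg : P.natDegree = n) (hQdeg : Q.degree < (n : ℕ))
    (f : Polynomial ℂ)
    (hf : f = P.map (algebraMap ℝ ℂ) + Polynomial.C Complex.I * Q.map (algebraMap ℝ ℂ))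
    (hplus : (f.roots.filter (fun z => 0 < z.im)).card = nplus)
    (hminus : (f.roots.filter (fun z => z.im < 0)).card = nminus)
    (hzero : (f.roots.filter (fun z => z.im = 0)).card = nzero)
    (hsum : nplus + nminus + nzero = n)
    (hn0 : nzero < n)
    (hlim : (nplus < nminus ∧
        Tendsto (fun x : ℝ => P.eval x / Q.eval x) atTop atBot) ∨
      (nminus < nplus ∧
        Tendsto (fun x : ℝ => P.eval x / Q.eval x) atTop atTop)) :
    (∃ μ ν : ℕ → ℝ,
      (∀ i, i < n - 2 * min nplus nminus → P.IsRoot (μ i)) ∧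
      (∀ i, i < n - 2 * min nplus nminus → Q.IsRoot (ν i)) ∧
      (∀ i, i < n - 2 * min nplus nminus → μ i ≤ ν i) ∧
      (∀ i, i + 1 < n - 2 * min nplus nminus → ν i ≤ μ (i + 1)) ∧
      (∀ x : ℝ,
        ((Finset.range (n - 2 * min nplus nminus)).filter (fun i => μ i = x)).card ≤
          P.rootMultiplicity x) ∧
      (∀ x : ℝ,
        ((Finset.range (n - 2 * min nplus nminus)).filter (fun i => ν i = x)).card ≤
          Q.rootMultiplicity x)) ∧
    (nzero = 0 →
      ∃ μ ν : ℕ → ℝ,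
        (∀ i, i < n - 2 * min nplus nminus → P.IsRoot (μ i)) ∧
        (∀ i, i < n - 2 * min nplus nminus → Q.IsRoot (ν i)) ∧
        (∀ i, i < n - 2 * min nplus nminus → μ i < ν i) ∧
        (∀ i, i + 1 < n - 2 * min nplus nminus → ν i < μ (i + 1))) := by
  have hQ0 : Q ≠ 0 := by
    rintro rfl
    rcases hlim with ⟨_, h⟩ | ⟨_, h⟩
    · obtain ⟨x, hx⟩ := (h.eventually (eventually_lt_atBot 0)).exists
      simp at hx
    · obtain ⟨x, hx⟩ := (h.eventually (eventually_gt_atTop 0)).exists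
      simp at hx
  have hfm : f.Monic := by
    rw [hf]
    refine (hP.map _).add_of_left ?_
    refine lt_of_le_of_lt (degree_mul_le _ _) ?_
    rw [degree_C Complex.I_ne_zero, zero_add, degree_map, degree_map,
      degree_eq_natDegree hP.ne_zero, hPdeg]
    exact hQdeg
  have hfprod : f = (f.roots.map (fun z => X - C z)).prod :=
    (IsAlgClosed.splits f).eq_prod_roots_of_monic hfm
  obtain ⟨T, hT⟩ : ∃ T, T = (f.roots.filter (fun z => z.im = 0)).map Complex.re := ⟨_, rfl⟩
  obtain ⟨S, hS⟩ : ∃ S, S = f.roots.filter (fun z => ¬ z.im = 0) := ⟨_, rfl⟩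
  have hTc : T.card = nzero := by rw [hT, Multiset.card_map, hzero]
  have hSim : ∀ z ∈ S, z.im ≠ 0 := by
    intro z hz
    rw [hS] at hz
    exact (Multiset.mem_filter.mp hz).2
  have hSp : (S.filter (fun z => 0 < z.im)).card = nplus := by
    rw [← hplus, hS, Multiset.filter_filter]
    congr 1
    refine Multiset.filter_congr (fun z _ => ⟨fun h => h.1, fun h => ⟨h, h.ne'⟩⟩)
  have hSm : (S.filter (fun z => z.im < 0)).card = nminus := by
    rw [← hminus, hS, Multiset.filter_filter]
    congr 1
    refine Multiset.filter_congr (fun z _ => ⟨fun h => h.1, fun h => ⟨h, h.ne⟩⟩)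
  have hfact : P.map (algebraMap ℝ ℂ) + C Complex.I * Q.map (algebraMap ℝ ℂ) =
      ((T.map (fun r => X - C r)).prod).map (algebraMap ℝ ℂ) *
        (S.map (fun z => X - C z)).prod := by
    rw [← hf]
    have hTm : ((T.map (fun r => X - C r)).prod).map (algebraMap ℝ ℂ) =
        ((f.roots.filter (fun z => z.im = 0)).map (fun z => X - C z)).prod := by
      rw [Polynomial.map_multiset_prod, hT, Multiset.map_map, Multiset.map_map]
      congr 1
      refine Multiset.map_congr rfl (fun z hz => ?_)
      have : ((z.re : ℝ) : ℂ) = z := by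
        apply Complex.ext
        · simp
        · simpa using (Multiset.mem_filter.mp hz).2.symm
      simp [this]
    rw [hTm, hS, ← Multiset.prod_add, ← Multiset.map_add, Multiset.filter_add_not]
    exact hfprod
  obtain ⟨p, q, hp, hq, hpq⟩ := split_real T _ P Q hfact
  obtain ⟨R, hR⟩ : ∃ R, R = (T.map (fun r => X - C r)).prod := ⟨_, rfl⟩
  have hRm : R.Monic := hR ▸ monic_multiset_prod_of_monic _ _ (fun r _ => monic_X_sub_C r)
  have hp0 : p ≠ 0 := by rintro rfl; exact hP.ne_zero (by simpa using hp)
  have hq0 : q ≠ 0 := by rintro rfl; exact hQ0 (by simpa using hq)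
  have hev : ∀ x : ℝ, ((p.eval x : ℝ) : ℂ) + Complex.I * ((q.eval x : ℝ) : ℂ)
      = (S.map (fun z => (x : ℂ) - z)).prod := by
    intro x
    have e0 : ∀ A : ℝ[X], (A.map (algebraMap ℝ ℂ)).eval (x : ℂ) = ((A.eval x : ℝ) : ℂ) := by
      intro A
      exact (Polynomial.eval_map_algebraMap A (x : ℂ)).trans
        (Polynomial.aeval_algebraMap_apply_eq_algebraMap_eval x A)
    have := congrArg (Polynomial.eval (x : ℂ)) hpq
    simp only [eval_add, eval_mul, eval_C, e0, eval_multiset_prod, Multiset.map_map,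
      Function.comp_def, eval_sub, eval_X] at this
    exact this
  have hevq : (fun x : ℝ => P.eval x / Q.eval x) =ᶠ[atTop] (fun x => p.eval x / q.eval x) := by
    have hfin : ∀ᶠ x in atTop, R.eval x ≠ 0 := by
      obtain ⟨M, hM⟩ := (R.roots.toFinset : Set ℝ).toFinite.bddAbove
      filter_upwards [eventually_gt_atTop M] with x hx h0
      have := hM (show x ∈ (R.roots.toFinset : Set ℝ) by
        simpa using ⟨hRm.ne_zero, h0⟩)
      linarith
    filter_upwards [hfin] with x hx
    rw [hp, hq, ← hR, eval_mul, eval_mul, mul_div_mul_left _ _ hx]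
  obtain ⟨d, hd, μ, ν, c1, c2, c3, c4⟩ : ∃ d, n - 2 * min nplus nminus = T.card + d ∧
      ∃ μ ν : ℕ → ℝ, (∀ i, i < d → p.IsRoot (μ i)) ∧ (∀ i, i < d → q.IsRoot (ν i)) ∧
      (∀ i, i < d → μ i < ν i) ∧ (∀ i, i + 1 < d → ν i < μ (i + 1)) := by
    rcases hlim with ⟨hlt, h⟩ | ⟨hlt, h⟩
    · exact ⟨nminus - nplus, by omega, core_neg S hSim p q _ hev (by omega) (h.congr' hevq)⟩
    · exact ⟨nplus - nminus, by omega, core_pos S hSim p q _ hev (by omega) (h.congr' hevq)⟩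
  rw [hd]
  constructor
  · obtain ⟨A, B, hA, hB, lA, lB, k1, k2⟩ := merge_chain T p q hp0 hq0 d μ ν c1 c2 c3 c4
    rw [← hp] at lA
    rw [← hq] at lB
    obtain ⟨α, a1, a2, a3⟩ := enum_multiset A
    obtain ⟨β, b1, b2, b3⟩ := enum_multiset B
    rw [hA] at a1 a2 a3
    rw [hB] at b1 b2 b3
    refine ⟨α, β, ?_, ?_, ?_, ?_, ?_, ?_⟩
    · intro i hi
      exact (mem_roots hP.ne_zero).mp (Multiset.mem_of_le lA (a1 i hi))
    · intro i hi
      exact (mem_roots hQ0).mp (Multiset.mem_of_le lB (b1 i hi))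
    · intro i hi
      exact (a3 i _ hi).mpr (((b3 i _ hi).mp le_rfl).trans (k1 _))
    · intro i hi
      have e1 := (a3 (i + 1) _ hi).mp le_rfl
      have e2 := k2 (α (i + 1))
      exact (b3 i _ (by omega)).mpr (by omega)
    · intro x
      rw [a2, ← count_roots]
      exact Multiset.count_le_of_le x lA
    · intro x
      rw [b2, ← count_roots]
      exact Multiset.count_le_of_le x lB
  · intro h0
    have hT0 : T = 0 := Multiset.card_eq_zero.mp (hTc.trans h0)
    rw [hT0] at hp hq ⊢
    simp only [Multiset.map_zero, Multiset.prod_zero, one_mul] at hp hq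
    rw [hp, hq]
    simp only [Multiset.card_zero, zero_add]
    exact ⟨μ, ν, c1, c2, c3, c4⟩
end

section
/- Let g(x) = ∏_{j=1}^n (x - x_j) = x^n + b_1 x^{n-1} + b_2 x^{n-2} + ... + b_n be a real polynomial, where x_1, ..., x_n are complex numbers with Re(x_j) ≤ 0 for all j, and set b_0 := 1. Let 1 ≤ k < l ≤ n-1 with k even and l odd. Then b_k b_l = b_{k-1} b_{l+1} if and only if either (i) zero is a root of g of multiplicity at least n - l + 1, or (ii) Re(x_j) = 0 for all j. -/
open Polynomial

/-- Coefficients of `f`, extended by zero to negative indices. -/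
noncomputable def cz (f : ℝ[X]) (i : ℤ) : ℝ := if 0 ≤ i then f.coeff i.toNat else 0

lemma cz_natCast (f : ℝ[X]) (i : ℕ) : cz f (i : ℤ) = f.coeff i := by
  simp [cz]

lemma cz_X_mul (f : ℝ[X]) (i : ℤ) : cz (X * f) i = cz f (i - 1) := by
  unfold cz
  rcases lt_trichotomy i 0 with h | h | h
  · rw [if_neg (by omega), if_neg (by omega)]
  · subst h; simp
  · obtain ⟨m, rfl⟩ : ∃ m : ℕ, i = (m : ℤ) + 1 := ⟨(i - 1).toNat, by omega⟩
    rw [if_pos (by omega), if_pos (by omega)]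
    have h1 : ((m : ℤ) + 1).toNat = m + 1 := by omega
    have h2 : ((m : ℤ) + 1 - 1).toNat = m := by omega
    rw [h1, h2, coeff_X_mul]

lemma cz_add (f g : ℝ[X]) (i : ℤ) : cz (f + g) i = cz f i + cz g i := by
  unfold cz; split_ifs <;> simp

lemma cz_C_mul (a : ℝ) (f : ℝ[X]) (i : ℤ) : cz (C a * f) i = a * cz f i := by
  unfold cz; split_ifs <;> simp

structure Good (N : ℤ) (c : ℤ → ℝ) : Prop where
  nn : 0 ≤ N
  pos : ∀ i, 0 ≤ i → i ≤ N → 0 < c i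
  neg : ∀ i, i < 0 → c i = 0
  big : ∀ i, N < i → c i = 0
  D : ∀ i j, j < i → (i - j) % 2 = 1 → c (i + 1) * c (j - 1) ≤ c i * c j
  S : ∀ i j, 0 ≤ j → j < i → i ≤ N → (i - j) % 2 = 1 → (N - i) % 2 = 0 →
    c (i + 1) * c (j - 1) < c i * c j

lemma Good.nonneg {N : ℤ} {c : ℤ → ℝ} (h : Good N c) (i : ℤ) : 0 ≤ c i := by
  by_cases h0 : i < 0
  · rw [h.neg i h0]
  by_cases h1 : N < i
  · rw [h.big i h1]
  exact (h.pos i (by omega) (by omega)).le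

lemma Good.T {N : ℤ} {c : ℤ → ℝ} (h : Good N c) (i j : ℤ) (hij : j < i) (ho : (i - j) % 2 = 1) :
    c (i + 2) * c (j - 1) ≤ c i * c (j + 1) := by
  have key : 0 ≤ c i * c (j + 1) := mul_nonneg (h.nonneg _) (h.nonneg _)
  by_cases h1 : j - 1 < 0
  · rw [h.neg _ h1]; simpa using key
  by_cases h2 : N < i + 2
  · rw [h.big _ h2]; simpa using key
  have a1 := h.D i j hij ho
  have a2 := h.D (i + 1) (j + 1) (by omega) (by omega)
  have e1 : i + 1 + 1 = i + 2 := by ring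
  have e2 : j + 1 - 1 = j := by ring
  rw [e1, e2] at a2
  have p1 := h.pos (i + 1) (by omega) (by omega)
  have p2 := h.pos j (by omega) (by omega)
  have p3 := h.nonneg (i + 2)
  have p4 := h.nonneg (j - 1)
  have p5 := h.nonneg i
  have p6 := h.nonneg (j + 1)
  have := mul_le_mul a1 a2 (mul_nonneg p3 p2.le) (mul_nonneg p5 p2.le)
  have p7 : 0 < c (i + 1) * c j := mul_pos p1 p2
  refine le_of_mul_le_mul_left ?_ p7
  nlinarith

lemma Good.lin {N : ℤ} {c d : ℤ → ℝ} (h : Good N c) (a : ℝ) (ha : 0 < a)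
    (hd : ∀ i, d i = c (i - 1) + a * c i) : Good (N + 1) d := by
  have nn := h.nn
  have hpos : ∀ i, 0 ≤ i → i ≤ N + 1 → 0 < d i := by
    intro i h0 h1
    rw [hd]
    by_cases h2 : i = N + 1
    · have := h.pos (i - 1) (by omega) (by omega)
      have := mul_nonneg ha.le (h.nonneg i)
      linarith
    · have := mul_pos ha (h.pos i (by omega) (by omega))
      have := h.nonneg (i - 1)
      linarith
  have hbig : ∀ i, N + 1 < i → d i = 0 := by
    intro i h0
    rw [hd, h.big i (by omega), h.big (i - 1) (by omega)]; simp
  have key : ∀ i j, d i * d j - d (i + 1) * d (j - 1) =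
      (c (i - 1) * c (j - 1) - c (i - 1 + 1) * c (j - 1 - 1))
      + a * (c (i - 1) * c (j - 1 + 1) - c (i - 1 + 2) * c (j - 1 - 1))
      + a ^ 2 * (c i * c j - c (i + 1) * c (j - 1)) := by
    intro i j
    rw [hd, hd, hd, hd]
    have e1 : i + 1 - 1 = i := by ring
    have e2 : i - 1 + 1 = i := by ring
    have e3 : i - 1 + 2 = i + 1 := by ring
    have e4 : j - 1 + 1 = j := by ring
    rw [e1, e2, e3, e4]
    ring
  refine ⟨by omega, hpos, ?_, hbig, ?_, ?_⟩
  · intro i h0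
    rw [hd, h.neg i h0, h.neg (i - 1) (by omega)]; simp
  · intro i j hij ho
    have k := key i j
    have a1 := h.D (i - 1) (j - 1) (by omega) (by omega)
    have a2 := h.T (i - 1) (j - 1) (by omega) (by omega)
    have a3 := h.D i j (by omega) (by omega)
    have := mul_nonneg ha.le (sub_nonneg.2 a2)
    have := mul_nonneg (sq_nonneg a) (sub_nonneg.2 a3)
    linarith
  · intro i j hj hij hi ho he
    by_cases h2 : i = N + 1
    · rw [hbig (i + 1) (by omega), zero_mul]
      exact mul_pos (hpos _ (by omega) (by omega)) (hpos _ (by omega) (by omega))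
    have k := key i j
    have a1 := h.D (i - 1) (j - 1) (by omega) (by omega)
    have a2 := h.T (i - 1) (j - 1) (by omega) (by omega)
    have a3 := h.D i j (by omega) (by omega)
    have b2 := mul_nonneg ha.le (sub_nonneg.2 a2)
    have b3 := mul_nonneg (sq_nonneg a) (sub_nonneg.2 a3)
    by_cases h3 : j = 0
    · have z : c (j - 1 - 1) = 0 := h.neg _ (by omega)
      have p1 := h.pos (i - 1) (by omega) (by omega)
      have p2 := h.pos (j - 1 + 1) (by omega) (by omega)
      have := mul_pos ha (mul_pos p1 p2)
      rw [z] at k a1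
      simp only [mul_zero, sub_zero] at k a1
      linarith
    · have a1 := h.S (i - 1) (j - 1) (by omega) (by omega) (by omega) (by omega) (by omega)
      linarith

lemma Good.quad {N : ℤ} {c d : ℤ → ℝ} (h : Good N c) (p q : ℝ) (hp : 0 ≤ p) (hq : 0 < q)
    (hpN : 0 < p ∨ 1 ≤ N)
    (hd : ∀ i, d i = c (i - 2) + p * c (i - 1) + q * c i) : Good (N + 2) d := by
  have nn := h.nn
  have hpos : ∀ i, 0 ≤ i → i ≤ N + 2 → 0 < d i := by
    intro i h0 h1
    rw [hd]
    have n1 := h.nonneg (i - 2)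
    have n2 := mul_nonneg hp (h.nonneg (i - 1))
    have n3 := mul_nonneg hq.le (h.nonneg i)
    by_cases h2 : i ≤ N
    · have := mul_pos hq (h.pos i (by omega) (by omega))
      linarith
    by_cases h3 : 2 ≤ i
    · have := h.pos (i - 2) (by omega) (by omega)
      linarith
    · have hp' : 0 < p := by
        rcases hpN with h | h
        · exact h
        · omega
      have := mul_pos hp' (h.pos (i - 1) (by omega) (by omega))
      linarith
  have hbig : ∀ i, N + 2 < i → d i = 0 := by
    intro i h0
    rw [hd, h.big i (by omega), h.big (i - 1) (by omega), h.big (i - 2) (by omega)]; simp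
  have key : ∀ i j, d i * d j - d (i + 1) * d (j - 1) =
      (c (i - 2) * c (j - 2) - c (i - 2 + 1) * c (j - 2 - 1))
      + p * (c (i - 2) * c (j - 2 + 1) - c (i - 2 + 2) * c (j - 2 - 1))
      + p * q * (c (i - 1) * c (j - 1 + 1) - c (i - 1 + 2) * c (j - 1 - 1))
      + p ^ 2 * (c (i - 1) * c (j - 1) - c (i - 1 + 1) * c (j - 1 - 1))
      + q * (c (i - 2) * c j - c (i - 2 + 1) * c (j - 1))
      + q * (c i * c (j - 2) - c (i + 1) * c (j - 2 - 1))
      + q ^ 2 * (c i * c j - c (i + 1) * c (j - 1)) := by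
    intro i j
    rw [hd, hd, hd, hd]
    have e1 : i + 1 - 1 = i := by ring
    have e2 : i - 1 + 1 = i := by ring
    have e3 : i - 1 + 2 = i + 1 := by ring
    have e4 : j - 1 + 1 = j := by ring
    have e5 : i - 2 + 1 = i - 1 := by ring
    have e6 : j - 2 + 1 = j - 1 := by ring
    have e7 : i - 2 + 2 = i := by ring
    have e8 : j - 1 - 1 = j - 2 := by ring
    have e9 : j - 1 - 2 = j - 3 := by ring
    have e10 : j - 2 - 1 = j - 3 := by ring
    have e11 : i + 1 - 2 = i - 1 := by ring
    rw [e1, e2, e3, e4, e5, e6, e7, e8, e9, e10, e11]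
    ring
  have key2 : ∀ i j, j < i → (i - j) % 2 = 1 →
      q ^ 2 * (c i * c j - c (i + 1) * c (j - 1)) ≤ d i * d j - d (i + 1) * d (j - 1) := by
    intro i j hij ho
    have k := key i j
    have a1 := h.D (i - 2) (j - 2) (by omega) (by omega)
    have a2 := mul_nonneg hp (sub_nonneg.2 (h.T (i - 2) (j - 2) (by omega) (by omega)))
    have a3 := mul_nonneg (mul_nonneg hp hq.le)
      (sub_nonneg.2 (h.T (i - 1) (j - 1) (by omega) (by omega)))
    have a4 := mul_nonneg (sq_nonneg p)
      (sub_nonneg.2 (h.D (i - 1) (j - 1) (by omega) (by omega)))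
    have a5 : c (i - 2 + 1) * c (j - 1) ≤ c (i - 2) * c j := by
      by_cases hh : i = j + 1
      · subst hh
        have e1 : j + 1 - 2 + 1 = j := by ring
        have e2 : j + 1 - 2 = j - 1 := by ring
        rw [e1, e2, mul_comm]
      · exact h.D (i - 2) j (by omega) (by omega)
    have a6 := mul_nonneg hq.le (sub_nonneg.2 a5)
    have a7 := mul_nonneg hq.le (sub_nonneg.2 (h.D i (j - 2) (by omega) (by omega)))
    linarith
  refine ⟨by omega, hpos, ?_, hbig, ?_, ?_⟩
  · intro i h0
    rw [hd, h.neg i h0, h.neg (i - 1) (by omega), h.neg (i - 2) (by omega)]; simp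
  · intro i j hij ho
    have k := key2 i j hij ho
    have := mul_nonneg (sq_nonneg q) (sub_nonneg.2 (h.D i j hij ho))
    linarith
  · intro i j hj hij hi ho he
    by_cases h2 : i = N + 2
    · rw [hbig (i + 1) (by omega), zero_mul]
      exact mul_pos (hpos _ (by omega) (by omega)) (hpos _ (by omega) (by omega))
    have k := key2 i j hij ho
    have := mul_pos (pow_pos hq 2) (sub_pos.2 (h.S i j hj hij (by omega) ho (by omega)))
    linarith

lemma good_one : Good 0 (cz 1) := by
  have h : ∀ i : ℤ, i ≠ 0 → cz 1 i = 0 := by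
    intro i hi
    unfold cz
    split_ifs
    · rw [coeff_one, if_neg (by omega)]
    · rfl
  refine ⟨le_rfl, ?_, fun i hi => h i (by omega), fun i hi => h i (by omega), ?_, ?_⟩
  · intro i h0 h1
    obtain rfl : i = 0 := by omega
    simp [cz]
  · intro i j hij ho
    have h1 : cz 1 i * cz 1 j = 0 := by
      by_cases hi : i = 0
      · rw [h j (by omega), mul_zero]
      · rw [h i hi, zero_mul]
    have h2 : cz 1 (i + 1) * cz 1 (j - 1) = 0 := by
      by_cases hi : i + 1 = 0
      · rw [h (j - 1) (by omega), mul_zero]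
      · rw [h _ hi, zero_mul]
    rw [h1, h2]
  · intro i j; omega

/-- Main induction. -/
lemma main_ind : ∀ (N : ℕ) (f : ℝ[X]), f.Monic → f.natDegree = N → f.coeff 0 ≠ 0 →
    (∀ z : ℂ, aeval z f = 0 → z.re ≤ 0) →
    (Good N (cz f) ∧ (∃ z : ℂ, aeval z f = 0 ∧ z.re ≠ 0)) ∨ ∀ z : ℂ, aeval z f = 0 → z.re = 0 := by
  intro N
  induction N using Nat.strong_induction_on with
  | _ N ih =>
  intro f hm hN h0 hr
  by_cases hall : ∀ z : ℂ, aeval z f = 0 → z.re = 0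
  · exact Or.inr hall
  left
  have hex : ∃ z : ℂ, aeval z f = 0 ∧ z.re ≠ 0 := by push Not at hall; exact hall
  refine ⟨?_, hex⟩
  -- quadratic step
  have hquad : ∀ z : ℂ, aeval z f = 0 → z.im ≠ 0 →
      (z.re = 0 ∨ ∀ w : ℂ, aeval w f = 0 → w.re ≠ 0) → Good N (cz f) := by
    intro z hz him hcase
    obtain ⟨r, hfr⟩ := Polynomial.quadratic_dvd_of_aeval_eq_zero_im_ne_zero f hz him
    have hq : (0 : ℝ) < ‖z‖ ^ 2 := by
      have : z ≠ 0 := by rintro rfl; simp at him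
      positivity
    have hQm : (X ^ 2 - C (2 * z.re) * X + C (‖z‖ ^ 2) : ℝ[X]).Monic := by
      monicity!
    have hQd : (X ^ 2 - C (2 * z.re) * X + C (‖z‖ ^ 2) : ℝ[X]).natDegree = 2 := by
      compute_degree!
    have hrm : r.Monic := by
      rw [hfr] at hm; exact hQm.of_mul_monic_left hm
    have hrd : N = 2 + r.natDegree := by
      rw [← hN, hfr, hQm.natDegree_mul hrm, hQd]
    have hr0 : r.coeff 0 ≠ 0 := by
      intro h; apply h0; rw [hfr, mul_coeff_zero, h, mul_zero]
    have hroot : ∀ w : ℂ, aeval w r = 0 → aeval w f = 0 := by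
      intro w hw; rw [hfr, map_mul, hw, mul_zero]
    have hp : 0 ≤ -(2 * z.re) := by have := hr z hz; linarith
    have hcz : ∀ i, cz f i = cz r (i - 2) + (-(2 * z.re)) * cz r (i - 1) + ‖z‖ ^ 2 * cz r i := by
      intro i
      have : f = X * (X * r) + C (-(2 * z.re)) * (X * r) + C (‖z‖ ^ 2) * r := by
        rw [hfr, C_neg]; ring
      rw [this, cz_add, cz_add, cz_C_mul, cz_C_mul, cz_X_mul, cz_X_mul, cz_X_mul]
      have e : i - 1 - 1 = i - 2 := by ring
      rw [e]
    have hcast : (N : ℤ) = (r.natDegree : ℤ) + 2 := by rw [hrd]; push_cast; ring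
    rw [hcast]
    rcases ih r.natDegree (by omega) r hrm rfl hr0 (fun w hw => hr w (hroot w hw)) with
      ⟨hg, w, hw, hwre⟩ | him0
    · refine hg.quad _ _ hp hq (Or.inr ?_) hcz
      by_contra hlt
      have : r.natDegree = 0 := by omega
      rw [(hrm.natDegree_eq_zero).1 this] at hw
      simp at hw
    · rcases hcase with hz0 | hne
      · exfalso
        obtain ⟨w, hw, hwre⟩ := hex
        have hw' := hw
        rw [hfr, map_mul, mul_eq_zero] at hw
        rcases hw with hw | hw
        · rw [hz0] at hw
          simp only [mul_zero, C_0, zero_mul, sub_zero, map_add, map_pow, aeval_X, aeval_C] at hw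
          have h1 := congrArg Complex.re hw
          have h2 := congrArg Complex.im hw
          simp [pow_two] at h1 h2
          have h2' : w.re * w.im = 0 := by linarith
          rcases mul_eq_zero.1 h2' with h | h
          · exact hwre h
          · rw [h] at h1
            nlinarith [sq_nonneg w.re]
        · exact hwre (him0 w hw)
      · have hr1 : r = 1 := by
          by_contra hne1
          have hd : r.natDegree ≠ 0 := fun h => hne1 ((hrm.natDegree_eq_zero).1 h)
          obtain ⟨w, hw⟩ := Complex.exists_root (f := r.map (algebraMap ℝ ℂ))
            (by rw [degree_map]; exact natDegree_pos_iff_degree_pos.1 (by omega))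
          have hw' : aeval w r = 0 := by
            rw [IsRoot.def, eval_map_algebraMap] at hw; exact hw
          exact hne w (hroot w hw') (him0 w hw')
        subst hr1
        rw [natDegree_one]
        refine good_one.quad _ _ hp hq (Or.inl ?_) hcz
        have := lt_of_le_of_ne (hr z hz) (hne z hz)
        linarith
  by_cases himag : ∃ z : ℂ, aeval z f = 0 ∧ z.re = 0
  · obtain ⟨z, hz, hz0⟩ := himag
    refine hquad z hz ?_ (Or.inl hz0)
    intro him
    have : z = 0 := Complex.ext hz0 him
    subst this
    apply h0
    rw [coeff_zero_eq_aeval_zero]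
    have h2 := hz
    rw [← map_zero (algebraMap ℝ ℂ), aeval_algebraMap_apply] at h2
    simpa using h2
  have hne : ∀ w : ℂ, aeval w f = 0 → w.re ≠ 0 := fun w hw h => himag ⟨w, hw, h⟩
  obtain ⟨z, hz, hzre⟩ := hex
  by_cases him : z.im ≠ 0
  · exact hquad z hz him (Or.inr hne)
  push Not at him
  have hzr : z = algebraMap ℝ ℂ z.re := Complex.ext (by simp) (by simp [him])
  have hroot0 : f.IsRoot z.re := by
    have h2 := hz
    rw [hzr, aeval_algebraMap_apply] at h2
    simpa using h2
  obtain ⟨r, hfr⟩ := dvd_iff_isRoot.2 hroot0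
  have hrm : r.Monic := by
    rw [hfr] at hm; exact (monic_X_sub_C _).of_mul_monic_left hm
  have hrd : N = 1 + r.natDegree := by
    rw [← hN, hfr, (monic_X_sub_C _).natDegree_mul hrm, natDegree_X_sub_C]
  have hr0 : r.coeff 0 ≠ 0 := by
    intro h; apply h0; rw [hfr, mul_coeff_zero, h, mul_zero]
  have hroot : ∀ w : ℂ, aeval w r = 0 → aeval w f = 0 := by
    intro w hw; rw [hfr, map_mul, hw, mul_zero]
  have ha : 0 < -z.re := by
    have := lt_of_le_of_ne (hr z hz) hzre
    linarith
  have hcz : ∀ i, cz f i = cz r (i - 1) + (-z.re) * cz r i := by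
    intro i
    have : f = X * r + C (-z.re) * r := by rw [C_neg]; nth_rewrite 1 [hfr]; ring
    rw [this, cz_add, cz_C_mul, cz_X_mul]
  have hcast : (N : ℤ) = (r.natDegree : ℤ) + 1 := by rw [hrd]; push_cast; ring
  rw [hcast]
  rcases ih r.natDegree (by omega) r hrm rfl hr0 (fun w hw => hr w (hroot w hw)) with
    ⟨hg, _⟩ | him0
  · exact hg.lin _ ha hcz
  · have hr1 : r = 1 := by
      by_contra hne1
      have hd : r.natDegree ≠ 0 := fun h => hne1 ((hrm.natDegree_eq_zero).1 h)
      obtain ⟨w, hw⟩ := Complex.exists_root (f := r.map (algebraMap ℝ ℂ))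
        (by rw [degree_map]; exact natDegree_pos_iff_degree_pos.1 (by omega))
      have hw' : aeval w r = 0 := by
        rw [IsRoot.def, eval_map_algebraMap] at hw; exact hw
      exact hne w (hroot w hw') (him0 w hw')
    subst hr1
    rw [natDegree_one]
    exact good_one.lin _ ha hcz

lemma imag_coeff (n : ℕ) (g : ℝ[X]) (x : ℕ → ℂ)
    (hroots : g.map (algebraMap ℝ ℂ) =
      ∏ j ∈ Finset.Icc 1 n, (Polynomial.X - Polynomial.C (x j)))
    (hx : ∀ j ∈ Finset.Icc 1 n, (x j).re = 0) (i : ℕ) (hi : (n + i) % 2 = 1) :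
    g.coeff i = 0 := by
  have h1 : (g.map (algebraMap ℝ ℂ)).map (starRingEnd ℂ) = g.map (algebraMap ℝ ℂ) := by
    rw [Polynomial.map_map]
    congr 1
    ext r
    simp
  have h2 : (g.map (algebraMap ℝ ℂ)).comp (-X) = (-1) ^ n * g.map (algebraMap ℝ ℂ) := by
    nth_rewrite 2 [← h1]
    rw [hroots, Polynomial.prod_comp, Polynomial.map_prod]
    have : ((-1 : ℂ[X]) ^ n) = ∏ j ∈ Finset.Icc 1 n, (-1 : ℂ[X]) := by simp
    rw [this, ← Finset.prod_mul_distrib]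
    refine Finset.prod_congr rfl fun j hj => ?_
    have hc : (starRingEnd ℂ) (x j) = - x j := by
      apply Complex.ext <;> simp [hx j hj]
    simp only [sub_comp, X_comp, C_comp, Polynomial.map_sub, map_X, map_C, hc, C_neg]
    ring
  have h3 : g.comp (-X) = (-1) ^ n * g := by
    apply Polynomial.map_injective (algebraMap ℝ ℂ) (algebraMap ℝ ℂ).injective
    rw [Polynomial.map_comp]
    simpa using h2
  have h4 := congrArg (fun p => p.coeff i) h3
  have h5 : ((-1 : ℝ[X]) ^ n) = C ((-1) ^ n) := by simp
  have h6 : (-X : ℝ[X]) = C (-1) * X := by simp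
  simp only [h6, comp_C_mul_X_coeff, h5, coeff_C_mul] at h4
  rcases Nat.even_or_odd n with hn | hn <;> rcases Nat.even_or_odd i with hii | hii
  · obtain ⟨a, rfl⟩ := hn; obtain ⟨b, rfl⟩ := hii; omega
  · rw [hn.neg_one_pow, hii.neg_one_pow] at h4; linarith
  · rw [hn.neg_one_pow, hii.neg_one_pow] at h4; linarith
  · obtain ⟨a, rfl⟩ := hn; obtain ⟨b, rfl⟩ := hii; omega

theorem newton_like_equality_even_odd
    (n k l : ℕ) (g : Polynomial ℝ) (x : ℕ → ℂ)
    (hdeg : g.natDegree = n)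
    (hroots : g.map (algebraMap ℝ ℂ) =
      ∏ j ∈ Finset.Icc 1 n, (Polynomial.X - Polynomial.C (x j)))
    (hx : ∀ j ∈ Finset.Icc 1 n, (x j).re ≤ 0)
    (hk : 1 ≤ k) (hkl : k < l) (hl : l ≤ n - 1)
    (hke : k % 2 = 0) (hlo : l % 2 = 1) :
    g.coeff (n - k) * g.coeff (n - l) = g.coeff (n - (k - 1)) * g.coeff (n - (l + 1)) ↔
      (n - l + 1 ≤ g.rootMultiplicity 0 ∨ ∀ j ∈ Finset.Icc 1 n, (x j).re = 0) := by
  have hm : g.Monic := by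
    apply Polynomial.monic_of_injective (algebraMap ℝ ℂ).injective
    rw [hroots]
    exact monic_prod_of_monic _ _ fun j _ => monic_X_sub_C _
  have hrt : ∀ z : ℂ, aeval z g = 0 ↔ ∃ j ∈ Finset.Icc 1 n, z = x j := by
    intro z
    rw [← eval_map_algebraMap, hroots, eval_prod, Finset.prod_eq_zero_iff]
    simp [sub_eq_zero]
  constructor
  · intro heq
    by_contra hcon
    push Not at hcon
    obtain ⟨hmul, j0, hj0, hj0re⟩ := hcon
    obtain ⟨f, hgf, hnd⟩ := exists_eq_pow_rootMultiplicity_mul_and_not_dvd g hm.ne_zero 0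
    set m := g.rootMultiplicity 0 with hmdef
    rw [C_0, sub_zero] at hgf hnd
    have hfm : f.Monic := by
      rw [hgf] at hm; exact (monic_X_pow m).of_mul_monic_left hm
    have hfd : n = m + f.natDegree := by
      rw [← hdeg]; nth_rewrite 1 [hgf]
      rw [(monic_X_pow m).natDegree_mul hfm, natDegree_X_pow]
    have hf0 : f.coeff 0 ≠ 0 := fun h => hnd (X_dvd_iff.2 h)
    have hfr : ∀ z : ℂ, aeval z f = 0 → aeval z g = 0 := by
      intro z hz; rw [hgf, map_mul, hz, mul_zero]
    have hcoef : ∀ i : ℕ, g.coeff i = cz f ((i : ℤ) - m) := by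
      intro i
      rw [hgf, coeff_X_pow_mul']
      unfold cz
      by_cases h : m ≤ i
      · rw [if_pos h, if_pos (by omega)]
        congr 1; omega
      · rw [if_neg h, if_neg (by omega)]
    rcases main_ind f.natDegree f hfm rfl hf0 (by
      intro z hz
      obtain ⟨j, hj, rfl⟩ := (hrt z).1 (hfr z hz)
      exact hx j hj) with ⟨hg, _⟩ | him
    · have hS := hg.S ((n : ℤ) - k - m) ((n : ℤ) - l - m) (by omega) (by omega) (by omega)
        (by omega) (by omega)
      rw [hcoef, hcoef, hcoef, hcoef] at heq
      have e1 : ((n - k : ℕ) : ℤ) - m = (n : ℤ) - k - m := by omega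
      have e2 : ((n - l : ℕ) : ℤ) - m = (n : ℤ) - l - m := by omega
      have e3 : ((n - (k - 1) : ℕ) : ℤ) - m = (n : ℤ) - k - m + 1 := by omega
      have e4 : ((n - (l + 1) : ℕ) : ℤ) - m = (n : ℤ) - l - m - 1 := by omega
      rw [e1, e2, e3, e4] at heq
      exact absurd heq hS.ne'
    · have h1 := (hrt (x j0)).2 ⟨j0, hj0, rfl⟩
      rw [hgf, map_mul, mul_eq_zero] at h1
      rcases h1 with h1 | h1
      · rw [map_pow, aeval_X] at h1
        have := eq_zero_of_pow_eq_zero h1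
        exact hj0re (by rw [this]; simp)
      · exact hj0re (him _ h1)
  · rintro (h | h)
    · have hd : (X : ℝ[X]) ^ (n - l + 1) ∣ g := by
        have := (le_rootMultiplicity_iff hm.ne_zero).1 h
        simpa using this
      rw [X_pow_dvd_iff] at hd
      rw [hd (n - l) (by omega), hd (n - (l + 1)) (by omega)]
      simp
    · rw [imag_coeff n g x hroots h (n - l) (by omega),
        imag_coeff n g x hroots h (n - (k - 1)) (by omega)]
      simp
end

section
/- Let f(x) = x^{2m} + a_1 x^{2m-1} + a_2 x^{2m-2} + ... + a_{2m} be a real polynomial of even degree 2m which has at most one root (counted with multiplicity) with positive real part and at least one root with nonzero real part. Then the polynomial y^m - a_2 y^{m-1} + a_4 y^{m-2} - ... + (-1)^m a_{2m} has at least m - 1 nonnegative real roots, counted with multiplicity. -/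
open Polynomial ComplexConjugate

structure GoodC (n : ℕ) (y e o : ℂ) : Prop where
  a : 0 ≤ (e * conj o).im
  b : 0 ≤ (y * o * conj e).im
  od : Odd n → o ≠ 0 ∧ (0 < (y * o * conj e).im ∨ e = 0)
  ev : Even n → e ≠ 0 ∧ (0 < (e * conj o).im ∨ o = 0)

lemma goodC_mul {n k : ℕ} {y e o e' o' : ℂ} (hy : y ≠ 0) (h : GoodC n y e o) (h' : GoodC k y e' o') :
    GoodC (n + k) y (e * e' + y * (o * o')) (e * o' + o * e') := by
  obtain ⟨a, b, od, ev⟩ := h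
  obtain ⟨a', b', od', ev'⟩ := h'
  have A : ((e * e' + y * (o * o')) * conj (e * o' + o * e')).im =
      Complex.normSq e * (e' * conj o').im + Complex.normSq e' * (e * conj o).im
      + Complex.normSq o * (y * o' * conj e').im + Complex.normSq o' * (y * o * conj e).im := by
    simp [Complex.normSq_apply]; ring
  have B : (y * (e * o' + o * e') * conj (e * e' + y * (o * o'))).im =
      Complex.normSq e * (y * o' * conj e').im + Complex.normSq e' * (y * o * conj e).im
      + Complex.normSq y * (Complex.normSq o * (e' * conj o').im + Complex.normSq o' * (e * conj o).im) := by
    simp [Complex.normSq_apply]; ring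
  have ne := Complex.normSq_nonneg e
  have ne' := Complex.normSq_nonneg e'
  have no := Complex.normSq_nonneg o
  have no' := Complex.normSq_nonneg o'
  have py := Complex.normSq_pos.2 hy
  have key1 : ∀ e o : ℂ, 0 < (e * conj o).im → e ≠ 0 := by
    rintro e o h rfl; simp at h
  have key2 : ∀ e o : ℂ, 0 < (y * o * conj e).im → o ≠ 0 := by
    rintro e o h rfl; simp at h
  refine ⟨by rw [A]; positivity, by rw [B]; positivity, ?_, ?_⟩
  · intro hodd
    suffices 0 < (y * (e * o' + o * e') * conj (e * e' + y * (o * o'))).im ∨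
      (e * o' + o * e' ≠ 0 ∧ e * e' + y * (o * o') = 0) by
      rcases this with h | h
      · exact ⟨key2 _ _ h, Or.inl h⟩
      · exact ⟨h.1, Or.inr h.2⟩
    rw [B]
    rcases Nat.even_or_odd n with hn | hn
    · have hk : Odd k := by grind
      obtain ⟨h1, h2⟩ := ev hn
      obtain ⟨h3, h4⟩ := od' hk
      have p1 := Complex.normSq_pos.2 h1
      have p3 := Complex.normSq_pos.2 h3
      rcases h2 with h2 | h2
      · left; positivity
      rcases h4 with h4 | h4
      · left; positivity
      right; subst h2 h4; simp [h1, h3]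
    · have hk : Even k := by grind
      obtain ⟨h1, h2⟩ := od hn
      obtain ⟨h3, h4⟩ := ev' hk
      have p1 := Complex.normSq_pos.2 h1
      have p3 := Complex.normSq_pos.2 h3
      rcases h2 with h2 | h2
      · left; positivity
      rcases h4 with h4 | h4
      · left; positivity
      right; subst h2 h4; simp [h1, h3]
  · intro heven
    suffices 0 < ((e * e' + y * (o * o')) * conj (e * o' + o * e')).im ∨
      (e * e' + y * (o * o') ≠ 0 ∧ e * o' + o * e' = 0) by
      rcases this with h | h
      · exact ⟨key1 _ _ h, Or.inl h⟩
      · exact ⟨h.1, Or.inr h.2⟩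
    rw [A]
    rcases Nat.even_or_odd n with hn | hn
    · have hk : Even k := by grind
      obtain ⟨h1, h2⟩ := ev hn
      obtain ⟨h3, h4⟩ := ev' hk
      have p1 := Complex.normSq_pos.2 h1
      have p3 := Complex.normSq_pos.2 h3
      rcases h2 with h2 | h2
      · left; positivity
      rcases h4 with h4 | h4
      · left; positivity
      right; subst h2 h4; simp [h1, h3]
    · have hk : Odd k := by grind
      obtain ⟨h1, h2⟩ := od hn
      obtain ⟨h3, h4⟩ := od' hk
      have p1 := Complex.normSq_pos.2 h1
      have p3 := Complex.normSq_pos.2 h3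
      rcases h2 with h2 | h2
      · left; positivity
      rcases h4 with h4 | h4
      · left; positivity
      right; subst h2 h4; simp [h1, h3, hy]

/-- real version; `a`, `b` are the values of the two Wronskians -/
structure GoodR (n : ℕ) (y e o de dO : ℝ) : Prop where
  e0 : 0 ≤ e
  o0 : 0 ≤ o
  a : 0 ≤ de * o - e * dO
  b : 0 ≤ (o + y * dO) * e - y * o * de
  od : Odd n → 0 < o ∧ (0 < (o + y * dO) * e - y * o * de ∨ e = 0)
  ev : Even n → 0 < e ∧ (0 < de * o - e * dO ∨ o = 0)

lemma goodR_mul {n k : ℕ} {y e o e' o' de dO de' dO' : ℝ} (hy : 0 < y) (h : GoodR n y e o de dO)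
    (h' : GoodR k y e' o' de' dO') :
    GoodR (n + k) y (e * e' + y * (o * o')) (e * o' + o * e')
      (de * e' + e * de' + (o * o' + y * (dO * o' + o * dO')))
      (de * o' + e * dO' + (dO * e' + o * de')) := by
  obtain ⟨e0, o0, a, b, od, ev⟩ := h
  obtain ⟨e0', o0', a', b', od', ev'⟩ := h'
  have A : (de * e' + e * de' + (o * o' + y * (dO * o' + o * dO'))) * (e * o' + o * e')
      - (e * e' + y * (o * o')) * (de * o' + e * dO' + (dO * e' + o * de'))
      = e ^ 2 * (de' * o' - e' * dO') + e' ^ 2 * (de * o - e * dO)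
      + o ^ 2 * ((o' + y * dO') * e' - y * o' * de') + o' ^ 2 * ((o + y * dO) * e - y * o * de) := by
    ring
  have B : ((e * o' + o * e') + y * (de * o' + e * dO' + (dO * e' + o * de'))) * (e * e' + y * (o * o'))
      - y * (e * o' + o * e') * (de * e' + e * de' + (o * o' + y * (dO * o' + o * dO')))
      = e ^ 2 * ((o' + y * dO') * e' - y * o' * de') + e' ^ 2 * ((o + y * dO) * e - y * o * de)
      + y ^ 2 * (o ^ 2 * (de' * o' - e' * dO') + o' ^ 2 * (de * o - e * dO)) := by
    ring
  have E0 : 0 ≤ e * e' + y * (o * o') := by positivity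
  have O0 : 0 ≤ e * o' + o * e' := by positivity
  refine ⟨E0, O0, by rw [A]; positivity, by rw [B]; positivity, ?_, ?_⟩
  · intro hodd
    rw [B]
    rcases Nat.even_or_odd n with hn | hn
    · have hk : Odd k := by grind
      obtain ⟨h1, h2⟩ := ev hn
      obtain ⟨h3, h4⟩ := od' hk
      refine ⟨by positivity, ?_⟩
      rcases h2 with h2 | h2
      · left; positivity
      rcases h4 with h4 | h4
      · left; positivity
      right; subst h2 h4; simp
    · have hk : Even k := by grind
      obtain ⟨h1, h2⟩ := od hn
      obtain ⟨h3, h4⟩ := ev' hk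
      refine ⟨by positivity, ?_⟩
      rcases h2 with h2 | h2
      · left; positivity
      rcases h4 with h4 | h4
      · left; positivity
      right; subst h2 h4; simp
  · intro heven
    rw [A]
    rcases Nat.even_or_odd n with hn | hn
    · have hk : Even k := by grind
      obtain ⟨h1, h2⟩ := ev hn
      obtain ⟨h3, h4⟩ := ev' hk
      refine ⟨by positivity, ?_⟩
      rcases h2 with h2 | h2
      · left; positivity
      rcases h4 with h4 | h4
      · left; positivity
      right; subst h2 h4; simp
    · have hk : Odd k := by grind
      obtain ⟨h1, h2⟩ := od hn
      obtain ⟨h3, h4⟩ := od' hk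
      refine ⟨by positivity, ?_⟩
      rcases h2 with h2 | h2
      · left; positivity
      rcases h4 with h4 | h4
      · left; positivity
      right; subst h2 h4; simp

structure GoodP (n : ℕ) (u E O : ℝ[X]) : Prop where
  dec : u = expand ℝ 2 E + X * expand ℝ 2 O
  c : ∀ y : ℂ, 0 < y.im → GoodC n y (aeval y E) (aeval y O)
  r : ∀ y : ℝ, 0 < y → GoodR n y (eval y E) (eval y O) (eval y (derivative E)) (eval y (derivative O))

lemma goodP_mul {n k : ℕ} {u E O u' E' O' : ℝ[X]} (h : GoodP n u E O) (h' : GoodP k u' E' O') :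
    GoodP (n + k) (u * u') (E * E' + X * (O * O')) (E * O' + O * E') := by
  refine ⟨?_, ?_, ?_⟩
  · rw [h.dec, h'.dec]; simp only [map_add, map_mul, expand_X]; ring
  · intro y hy
    have := goodC_mul (by rintro rfl; simp at hy) (h.c y hy) (h'.c y hy)
    simpa using this
  · intro y hy
    have := goodR_mul hy (h.r y hy) (h'.r y hy)
    simpa using this

lemma goodP_one : GoodP 0 1 1 0 := by
  refine ⟨by simp, fun y hy => ⟨by simp, by simp, by simp, by simp⟩, fun y hy => ⟨by simp, by simp, by simp, by simp, by simp, by simp⟩⟩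

lemma goodP_lin (r : ℝ) (hr : 0 ≤ r) : GoodP 1 (X + C r) (C r) 1 := by
  refine ⟨by simp [add_comm], fun y hy => ?_, fun y hy => ?_⟩
  · have e : (y * 1 * conj (r : ℂ)).im = r * y.im := by simp [mul_comm]
    refine ⟨by simp, ?_, fun _ => ⟨by simp, ?_⟩, by simp⟩
    · simp [Complex.conj_ofReal]; positivity
    · rcases hr.eq_or_lt with h | h
      · right; simp [← h]
      · left; simp [Complex.conj_ofReal]; positivity
  · refine ⟨by simpa, by simp, by simp, by simpa, fun _ => ⟨by simp, ?_⟩, by simp⟩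
    rcases hr.eq_or_lt with h | h
    · right; simp [← h]
    · left; simpa

lemma goodP_quad (p q : ℝ) (hp : 0 ≤ p) (hq : 0 ≤ q) :
    GoodP 2 (X ^ 2 + C p * X + C q) (X + C q) (C p) := by
  refine ⟨by simp; ring, fun y hy => ?_, fun y hy => ?_⟩
  · have ne : y + q ≠ 0 := by
      intro h; have := congrArg Complex.im h; simp at this; exact hy.ne' this
    have e1 : ((y + q) * conj (p : ℂ)).im = p * y.im := by simp [mul_comm]
    have e2 : (y * p * conj (y + q : ℂ)).im = p * q * y.im := by simp; ring
    have ea : aeval y (X + C q : ℝ[X]) = y + q := by simp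
    have eb : aeval y (C p : ℝ[X]) = (p : ℂ) := by simp
    rw [ea, eb]
    refine ⟨by rw [e1]; positivity, by rw [e2]; positivity, by simp, fun _ => ⟨ne, ?_⟩⟩
    rcases hp.eq_or_lt with h | h
    · right; simp [← h]
    · left; rw [e1]; positivity
  · refine ⟨by simp; positivity, by simpa, by simpa, ?_, by simp, fun _ => ⟨by simp; positivity, ?_⟩⟩
    · simp; nlinarith [mul_nonneg hp hq]
    · rcases hp.eq_or_lt with h | h
      · right; simp [← h]
      · left; simpa

lemma goodP_exists (n : ℕ) : ∀ u : ℝ[X], u.Monic → u.natDegree = n →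
    (∀ z : ℂ, aeval z u = 0 → z.re ≤ 0) → ∃ E O, GoodP n u E O := by
  induction n using Nat.strong_induction_on with
  | _ n ih =>
  intro u hu hn hz
  rcases Nat.eq_zero_or_pos n with h0 | hpos
  · subst h0
    rw [hu.natDegree_eq_zero.1 hn]
    exact ⟨_, _, goodP_one⟩
  by_cases hreal : ∃ x : ℝ, u.IsRoot x
  · obtain ⟨x, hx⟩ := hreal
    obtain ⟨v, rfl⟩ := dvd_iff_isRoot.2 hx
    have hv : v.Monic := (monic_X_sub_C x).of_mul_monic_left hu
    have hd := (monic_X_sub_C x).natDegree_mul hv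
    rw [natDegree_X_sub_C] at hd
    obtain ⟨E, O, h⟩ := ih v.natDegree (by omega) v hv rfl (fun z h => hz z (by simp [h]))
    have hx0 : x ≤ 0 := by simpa using hz x (by simp)
    have := goodP_mul (goodP_lin (-x) (by linarith)) h
    rw [← hd, hn] at this
    have e : (X + C (-x)) * v = (X - C x) * v := by simp [sub_eq_add_neg]
    rw [e] at this
    exact ⟨_, _, this⟩
  · have : ∃ z : ℂ, aeval z u = 0 := by
      apply IsAlgClosed.exists_aeval_eq_zero
      rw [degree_eq_natDegree hu.ne_zero, hn]; exact_mod_cast hpos.ne'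
    obtain ⟨z, hzu⟩ := this
    have him : z.im ≠ 0 := by
      intro h
      apply hreal
      refine ⟨z.re, ?_⟩
      have e : z = (z.re : ℂ) := by apply Complex.ext <;> simp [h]
      rw [e] at hzu
      have : aeval ((algebraMap ℝ ℂ) z.re) u = 0 := hzu
      rw [aeval_algebraMap_apply] at this
      simpa [IsRoot] using this
    obtain ⟨v, rfl⟩ := Polynomial.quadratic_dvd_of_aeval_eq_zero_im_ne_zero u hzu him
    have e0 : X ^ 2 - C (2 * z.re) * X + C (‖z‖ ^ 2) = X ^ 2 + C (-2 * z.re) * X + C (‖z‖ ^ 2) := by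
      simp [sub_eq_add_neg]
    have hm : (X ^ 2 - C (2 * z.re) * X + C (‖z‖ ^ 2)).Monic := by
      rw [e0]; monicity!
    have hdq : (X ^ 2 - C (2 * z.re) * X + C (‖z‖ ^ 2)).natDegree = 2 := by
      rw [e0]; compute_degree!
    have hv : v.Monic := hm.of_mul_monic_left hu
    have hd := hm.natDegree_mul hv
    rw [hdq] at hd
    obtain ⟨E, O, h⟩ := ih v.natDegree (by omega) v hv rfl (fun z h => hz z (by rw [map_mul, h, mul_zero]))
    have hx0 := hz z hzu
    have := goodP_mul (goodP_quad (-2 * z.re) (‖z‖ ^ 2) (by linarith) (by positivity)) h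
    rw [← hd, hn, ← e0] at this
    exact ⟨_, _, this⟩

lemma final_count (m : ℕ) (f F h : ℝ[X]) (hf : f.Monic) (hdeg : f.natDegree = 2 * m)
    (hF : ∀ k, F.coeff k = f.coeff (2 * k))
    (hh : ∀ k : ℕ, h.coeff k =
      if k ≤ m then (-1 : ℝ) ^ (m - k) * f.coeff (2 * k) else 0)
    (hc : ∀ y : ℂ, 0 < y.im → aeval y F ≠ 0)
    (hd : ∀ y : ℝ, 0 < y → eval y F = 0 → eval y (derivative F) ≠ 0)
    (hu : ∀ y y' : ℝ, 0 < y → y < y' → eval y F = 0 → eval y' F = 0 → False) :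
    m - 1 ≤ (h.roots.filter (fun y => 0 ≤ y)).card := by
  have hm : h.coeff m = 1 := by
    rw [hh]; simp [← hdeg, hf]
  have hh0 : h ≠ 0 := by rintro rfl; simp at hm
  have hnd : h.natDegree = m := by
    apply le_antisymm
    · rw [natDegree_le_iff_coeff_eq_zero]
      intro k hk; rw [hh, if_neg (by omega)]
    · exact le_natDegree_of_ne_zero (by simp [hm])
  have hcomp : h = C ((-1) ^ m) * F.comp (-X) := by
    ext k
    rw [coeff_C_mul, show (-X : ℝ[X]) = C (-1) * X by simp, comp_C_mul_X_coeff, hh, hF]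
    split_ifs with hk
    · obtain ⟨j, rfl⟩ := Nat.exists_eq_add_of_le hk
      have : ((-1 : ℝ) ^ k * (-1) ^ k) = 1 := by rw [← mul_pow]; simp
      rw [Nat.add_sub_cancel_left, pow_add]
      linear_combination -(-1) ^ j * f.coeff (2 * k) * this
    · rw [coeff_eq_zero_of_natDegree_lt (by omega)]; simp
  have hroot : ∀ y : ℝ, eval y h = (-1) ^ m * eval (-y) F := by
    intro y; rw [hcomp]; simp
  have hder : ∀ y : ℝ, eval y (derivative h) = -((-1) ^ m * eval (-y) (derivative F)) := by
    intro y; rw [hcomp, derivative_C_mul]; simp [derivative_comp]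
  have hs : h.Splits := by
    apply Splits.of_splits_map (algebraMap ℝ ℂ) (IsAlgClosed.splits _)
    intro z hz
    have hz' : aeval z h = 0 := by
      have := (mem_roots'.1 hz).2
      rwa [IsRoot, eval_map_algebraMap] at this
    have hz2 : aeval (-z) F = 0 := by
      rw [hcomp] at hz'
      simpa [aeval_comp] using hz'
    have him : z.im = 0 := by
      rcases lt_trichotomy z.im 0 with h | h | h
      · exact absurd hz2 (hc _ (by simpa))
      · exact h
      · exfalso
        apply hc (conj (-z)) (by simpa)
        rw [aeval_conj, hz2, map_zero]
    exact ⟨z.re, by apply Complex.ext <;> simp [him]⟩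
  have hcard := splits_iff_card_roots.1 hs
  have hsum : (h.roots.filter (fun y => 0 ≤ y)).card + (h.roots.filter (fun y => ¬ 0 ≤ y)).card = m := by
    rw [← Multiset.card_add, Multiset.filter_add_not, hcard, hnd]
  have hle : (h.roots.filter (fun y => ¬ 0 ≤ y)).card ≤ 1 := by
    have hF0 : ∀ y ∈ h.roots.filter (fun y => ¬ 0 ≤ y), 0 < -y ∧ eval (-y) F = 0 := by
      intro y hy
      rw [Multiset.mem_filter, mem_roots hh0, IsRoot, hroot] at hy
      refine ⟨by linarith [not_le.1 hy.2], by simpa using hy.1⟩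
    have hnodup : (h.roots.filter (fun y => ¬ 0 ≤ y)).Nodup := by
      rw [Multiset.nodup_iff_count_le_one]
      intro y
      by_contra hlt
      rw [not_le] at hlt
      have hy : y ∈ h.roots.filter (fun y => ¬ 0 ≤ y) := Multiset.count_pos.1 (by omega)
      have h2 : 1 < h.rootMultiplicity y := by
        rw [← count_roots]
        exact lt_of_lt_of_le hlt (Multiset.count_le_of_le _ (Multiset.filter_le _ _))
      rw [one_lt_rootMultiplicity_iff_isRoot hh0, IsRoot, IsRoot, hder] at h2
      obtain ⟨h3, h4⟩ := hF0 y hy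
      exact hd _ h3 h4 (by simpa using h2.2)
    rw [← Multiset.toFinset_card_of_nodup hnodup, Finset.card_le_one]
    intro x hx y hy
    rw [Multiset.mem_toFinset] at hx hy
    obtain ⟨h1, h2⟩ := hF0 x hx
    obtain ⟨h3, h4⟩ := hF0 y hy
    rcases lt_trichotomy (-x) (-y) with h | h | h
    · exact (hu _ _ h1 h h2 h4).elim
    · linarith
    · exact (hu _ _ h3 h h4 h2).elim
  omega

lemma coeff_even_part {f E O : ℝ[X]} (h : f = expand ℝ 2 E + X * expand ℝ 2 O) (k : ℕ) :
    E.coeff k = f.coeff (2 * k) := by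
  rw [h, coeff_add, coeff_expand (by norm_num)]
  have : (X * expand ℝ 2 O).coeff (2 * k) = 0 := by
    rcases k with _ | k
    · simp
    · rw [show 2 * (k + 1) = (2 * k + 1) + 1 by ring, coeff_X_mul, coeff_expand (by norm_num),
        if_neg (by omega)]
  simp [this]

lemma unique_pos {n : ℕ} {u E O : ℝ[X]} (hn : Odd n) (g : GoodP n u E O) {a : ℝ} (ha : 0 < a)
    (y y' : ℝ) (hy : 0 < y) (hyy : y < y') (h : y * eval y O = a * eval y E)
    (h' : y' * eval y' O = a * eval y' E) : False := by
  let G : ℝ → ℝ := fun t => eval t E / (t * eval t O)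
  have hO : ∀ t : ℝ, 0 < t → 0 < eval t O := fun t ht => ((g.r t ht).od hn).1
  have hG : ∀ t : ℝ, 0 < t → HasDerivAt G ((eval t (derivative E) * (t * eval t O) -
      eval t E * (1 * eval t O + t * eval t (derivative O))) / (t * eval t O) ^ 2) t := by
    intro t ht
    exact (E.hasDerivAt t).div ((hasDerivAt_id t).mul (O.hasDerivAt t)) (mul_pos ht (hO t ht)).ne'
  have hval : ∀ t : ℝ, 0 < t → t * eval t O = a * eval t E → G t = 1 / a := by
    intro t ht h
    have : 0 < eval t E := by
      have := mul_pos ht (hO t ht)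
      rw [h] at this
      exact pos_of_mul_pos_right this ha.le
    simp only [G]; rw [h]; field_simp
  have hcont : ContinuousOn G (Set.Ioi 0) := fun t ht => (hG t ht).continuousAt.continuousWithinAt
  have hanti : AntitoneOn G (Set.Ioi 0) := by
    apply antitoneOn_of_deriv_nonpos (convex_Ioi 0) hcont
    · intro t ht; rw [interior_Ioi] at ht
      exact (hG t ht).differentiableAt.differentiableWithinAt
    · intro t ht; rw [interior_Ioi] at ht
      rw [(hG t ht).deriv]
      apply div_nonpos_of_nonpos_of_nonneg _ (sq_nonneg _)
      linarith [(g.r t ht).b]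
  have hy' : 0 < y' := hy.trans hyy
  obtain ⟨c, hc, hc0⟩ := exists_hasDerivAt_eq_zero hyy
    (hcont.mono (fun t ht => lt_of_lt_of_le hy ht.1))
    ((hval y hy h).trans (hval y' hy' h').symm) (fun t ht => hG t (hy.trans ht.1))
  have hcp : 0 < c := hy.trans hc.1
  have hge := hanti (Set.mem_Ioi.2 hcp) (Set.mem_Ioi.2 hy') hc.2.le
  rw [hval y' hy' h'] at hge
  have hOc := hO c hcp
  rw [div_eq_zero_iff, or_iff_left (by positivity)] at hc0
  rcases ((g.r c hcp).od hn).2 with h | h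
  · linarith
  · have : G c = 0 := by simp [G, h]
    have : 0 < 1 / a := by positivity
    linarith

theorem even_part_has_nonneg_roots
    (m : ℕ) (f : Polynomial ℝ) (hf : f.Monic) (hdeg : f.natDegree = 2 * m)
    (hplus : ((f.map (algebraMap ℝ ℂ)).roots.filter (fun z => 0 < z.re)).card ≤ 1)
    (hnzero : ∃ z ∈ (f.map (algebraMap ℝ ℂ)).roots, z.re ≠ 0)
    (h : Polynomial ℝ)
    (hh : ∀ k : ℕ, h.coeff k =
      if k ≤ m then (-1 : ℝ) ^ (m - k) * f.coeff (2 * k) else 0) :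
    m - 1 ≤ (h.roots.filter (fun y => 0 ≤ y)).card := by
  have hmf : f.map (algebraMap ℝ ℂ) ≠ 0 := (hf.map _).ne_zero
  have hmem : ∀ z : ℂ, z ∈ (f.map (algebraMap ℝ ℂ)).roots ↔ aeval z f = 0 := by
    intro z; rw [mem_roots hmf, IsRoot, eval_map_algebraMap]
  by_cases hall : ∀ z : ℂ, aeval z f = 0 → z.re ≤ 0
  · obtain ⟨E, O, g⟩ := goodP_exists _ f hf hdeg hall
    have hev : Even (2 * m) := even_two_mul m
    have hr : ∀ y : ℝ, 0 < y → eval y E ≠ 0 := fun y hy => ((g.r y hy).ev hev).1.ne'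
    exact final_count m f E h hf hdeg (coeff_even_part g.dec) hh
      (fun y hy => ((g.c y hy).ev hev).1) (fun y hy h0 => absurd h0 (hr y hy))
      (fun y _ hy _ h0 _ => hr y hy h0)
  · push Not at hall
    obtain ⟨z, hz, hzre⟩ := hall
    have huniq : ∀ w : ℂ, aeval w f = 0 → 0 < w.re → w = z := by
      intro w hw hwre
      obtain ⟨t, ht⟩ := Multiset.exists_cons_of_mem
        (Multiset.mem_filter (p := fun z : ℂ => 0 < z.re).2 ⟨(hmem z).2 hz, hzre⟩)
      have hw' := Multiset.mem_filter (p := fun z : ℂ => 0 < z.re).2 ⟨(hmem w).2 hw, hwre⟩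
      rw [ht] at hplus hw'
      have : t = 0 := by simpa using hplus
      simpa [this] using hw'
    have hconj : conj z = z := huniq _ (by rw [aeval_conj, hz, map_zero]) (by simpa)
    obtain ⟨a, rfl⟩ := Complex.conj_eq_iff_real.1 hconj
    have ha : 0 < a := by simpa using hzre
    have hroot : f.IsRoot a := by
      have : aeval ((algebraMap ℝ ℂ) a) f = 0 := hz
      rw [aeval_algebraMap_apply] at this
      simpa [IsRoot] using this
    obtain ⟨u, rfl⟩ := dvd_iff_isRoot.2 hroot
    have hu : u.Monic := (monic_X_sub_C a).of_mul_monic_left hf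
    have hd := (monic_X_sub_C a).natDegree_mul hu
    rw [natDegree_X_sub_C, hdeg] at hd
    have hodd : Odd u.natDegree := by
      have : Even (1 + u.natDegree) := hd ▸ even_two_mul m
      grind
    have hneg : ∀ w : ℂ, aeval w u = 0 → w.re ≤ 0 := by
      intro w hw
      by_contra hcon
      have hwa := huniq w (by simp [hw]) (not_le.1 hcon)
      subst hwa
      have hua : u.IsRoot a := by
        have : aeval ((algebraMap ℝ ℂ) a) u = 0 := hw
        rw [aeval_algebraMap_apply] at this
        simpa [IsRoot] using this
      obtain ⟨v, rfl⟩ := dvd_iff_isRoot.2 hua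
      have hle : ({(a : ℂ), (a : ℂ)} : Multiset ℂ) ≤
          (((X - C a) * ((X - C a) * v)).map (algebraMap ℝ ℂ)).roots.filter (fun z => 0 < z.re) := by
        rw [Multiset.le_filter]
        refine ⟨?_, by simp [ha]⟩
        rw [Polynomial.map_mul] at hmf ⊢
        rw [roots_mul hmf]
        rw [Polynomial.map_mul] at hmf ⊢
        rw [roots_mul (right_ne_zero_of_mul hmf)]
        simp
      have := Multiset.card_le_card hle
      simp at this
      simp at hplus
      omega
    obtain ⟨E, O, g⟩ := goodP_exists _ u hu rfl hneg
    have hdec : (X - C a) * u = expand ℝ 2 (X * O - C a * E) + X * expand ℝ 2 (E - C a * O) := by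
      conv_lhs => rw [g.dec]
      simp only [map_sub, map_mul, expand_X, expand_C]; ring
    have hev : ∀ y : ℝ, eval y (X * O - C a * E) = 0 → y * eval y O = a * eval y E := by
      intro y hy; simp at hy; linarith
    refine final_count m _ (X * O - C a * E) h hf hdeg (coeff_even_part hdec) hh ?_ ?_ ?_
    · intro y hy h0
      have h1 : y * aeval y O = a * aeval y E := by
        simp at h0; linear_combination h0
      obtain ⟨ho, hb⟩ := (g.c y hy).od hodd
      have hy0 : y ≠ 0 := by rintro rfl; simp at hy
      rcases hb with hb | hb
      · rw [h1, mul_assoc, Complex.mul_conj] at hb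
        simp at hb
      · rw [hb, mul_zero] at h1
        exact mul_ne_zero hy0 ho h1
    · intro y hy h0 h1
      have h2 := hev y h0
      obtain ⟨ho, hb⟩ := (g.r y hy).od hodd
      simp at h1
      rcases hb with hb | hb
      · rw [h2] at hb
        have : eval y O + y * eval y (derivative O) = a * eval y (derivative E) := by linarith
        rw [this] at hb
        linarith
      · rw [hb, mul_zero] at h2
        exact (mul_pos hy ho).ne' h2
    · intro y y' hy hyy h0 h1
      exact unique_pos hodd g ha y y' hy hyy (hev y h0) (hev y' h1)
end

section
/- Let g(x) = ∏_{j=1}^n (x - x_j) = x^n + b_1 x^{n-1} + b_2 x^{n-2} + ... + b_n be a real polynomial, where x_1, ..., x_n are complex numbers with Re(x_j) ≤ 0 for all j, and set b_0 := 1. If 1 ≤ k < l ≤ n-1 and k and l have different parity, then b_k b_l ≥ b_{k-1} b_{l+1}. -/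
open Polynomial

/-- Sequences that are positive on `[0,n]`, zero elsewhere, satisfying the inequalities. -/
structure GoodSeq (n : ℤ) (c : ℤ → ℝ) : Prop where
  pos : ∀ m, 0 ≤ m → m ≤ n → 0 < c m
  neg : ∀ m, m < 0 → c m = 0
  big : ∀ m, n < m → c m = 0
  ineq : ∀ i j, i < j → (j - i) % 2 = 1 → c (i - 1) * c (j + 1) ≤ c i * c j

namespace GoodSeq

lemma nonneg {n : ℤ} {c : ℤ → ℝ} (h : GoodSeq n c) (m : ℤ) : 0 ≤ c m := by
  rcases lt_or_ge m 0 with h0 | h0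
  · exact (h.neg m h0).ge
  · rcases lt_or_ge n m with h1 | h1
    · exact (h.big m h1).ge
    · exact (h.pos m h0 h1).le

lemma two {n : ℤ} {c : ℤ → ℝ} (h : GoodSeq n c) (i j : ℤ) (hij : i < j)
    (hp : (j - i) % 2 = 1) : c (i - 2) * c (j + 1) ≤ c i * c (j - 1) := by
  have hr : 0 ≤ c i * c (j - 1) := mul_nonneg (h.nonneg _) (h.nonneg _)
  rcases lt_or_ge (i - 2) 0 with h0 | h0
  · rw [h.neg _ h0]; simpa using hr
  rcases lt_or_ge n (j + 1) with h1 | h1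
  · rw [h.big _ h1]; simpa using hr
  have p1 : 0 < c (i - 1) := h.pos _ (by omega) (by omega)
  have p2 : 0 < c j := h.pos _ (by omega) (by omega)
  have e1 := h.ineq i j hij hp
  have e2 := h.ineq (i - 1) (j - 1) (by omega) (by omega)
  rw [show i - 1 - 1 = i - 2 by ring, show j - 1 + 1 = j by ring] at e2
  have e3 := mul_le_mul e1 e2 (mul_nonneg (h.nonneg _) (h.nonneg _))
    (mul_nonneg (h.nonneg _) (h.nonneg _))
  have p3 : 0 < c (i - 1) * c j := mul_pos p1 p2
  refine le_of_mul_le_mul_left ?_ p3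
  nlinarith [e3]

lemma linear {n : ℤ} {c : ℤ → ℝ} (h : GoodSeq n c) (hn : 0 ≤ n) (a : ℝ) (ha : 0 < a) :
    GoodSeq (n + 1) (fun m => c (m - 1) + a * c m) := by
  refine ⟨fun m h0 h1 => ?_, fun m h0 => ?_, fun m h0 => ?_, fun i j hij hp => ?_⟩
  · have q1 := h.nonneg (m - 1)
    have q2 := mul_nonneg ha.le (h.nonneg m)
    rcases eq_or_lt_of_le h0 with h2 | h2
    · have := mul_pos ha (h.pos m h0 (by omega))
      linarith
    · have := h.pos (m - 1) (by omega) (by omega)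
      linarith
  · simp only [h.neg m h0, h.neg (m - 1) (by omega)]; simp
  · simp only [h.big m (by omega), h.big (m - 1) (by omega)]; simp
  · have e0 := h.ineq (i - 1) (j - 1) (by omega) (by omega)
    have e1 := h.two i j hij hp
    have e2 := h.ineq i j hij hp
    simp only [show i - 1 - 1 = i - 2 by ring, show j - 1 + 1 = j by ring,
      show j + 1 - 1 = j by ring] at *
    have e1' := mul_le_mul_of_nonneg_left e1 ha.le
    have e2' := mul_le_mul_of_nonneg_left e2 (mul_nonneg ha.le ha.le)
    linarith

lemma quadratic {n : ℤ} {c : ℤ → ℝ} (h : GoodSeq n c) (hn : 0 ≤ n) (p q : ℝ) (hp0 : 0 < p)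
    (hq0 : 0 < q) :
    GoodSeq (n + 2) (fun m => c (m - 2) + p * c (m - 1) + q * c m) := by
  refine ⟨fun m h0 h1 => ?_, fun m h0 => ?_, fun m h0 => ?_, fun i j hij hp => ?_⟩
  · have q0 := h.nonneg (m - 2)
    have q1 := mul_nonneg hp0.le (h.nonneg (m - 1))
    have q2 := mul_nonneg hq0.le (h.nonneg m)
    rcases (by omega : m = 0 ∨ m = 1 ∨ 2 ≤ m) with h2 | h2 | h2
    · have := mul_pos hq0 (h.pos m h0 (by omega))
      linarith
    · have := mul_pos hp0 (h.pos (m - 1) (by omega) (by omega))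
      linarith
    · have := h.pos (m - 2) (by omega) (by omega)
      linarith
  · simp only [h.neg m h0, h.neg (m - 1) (by omega), h.neg (m - 2) (by omega)]; simp
  · simp only [h.big m (by omega), h.big (m - 1) (by omega), h.big (m - 2) (by omega)]; simp
  · have e0 := h.ineq (i - 2) (j - 2) (by omega) (by omega)
    have e1 := h.two (i - 1) (j - 1) (by omega) (by omega)
    have e2 := h.ineq (i - 1) (j - 1) (by omega) (by omega)
    have e3 : c (i - 1) * c (j - 1) ≤ c i * c (j - 2) := by
      rcases (by omega : j = i + 1 ∨ i < j - 2) with h2 | h2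
      · subst h2
        rw [show i + 1 - 1 = i by ring, show i + 1 - 2 = i - 1 by ring, mul_comm]
      · have := h.ineq i (j - 2) h2 (by omega)
        rwa [show j - 2 + 1 = j - 1 by ring] at this
    have e4 := h.ineq (i - 2) j (by omega) (by omega)
    have e5 := h.two i j hij hp
    have e6 := h.ineq i j hij hp
    simp only [show i - 1 - 1 = i - 2 by ring, show j - 1 + 1 = j by ring,
      show j + 1 - 1 = j by ring, show i - 2 - 1 = i - 3 by ring, show i - 1 - 2 = i - 3 by ring,
      show j - 2 + 1 = j - 1 by ring, show j - 1 - 1 = j - 2 by ring,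
      show j + 1 - 2 = j - 1 by ring] at *
    have e1' := mul_le_mul_of_nonneg_left e1 hp0.le
    have e2' := mul_le_mul_of_nonneg_left e2 (mul_nonneg hp0.le hp0.le)
    have e3' := mul_le_mul_of_nonneg_left e3 hq0.le
    have e4' := mul_le_mul_of_nonneg_left e4 hq0.le
    have e5' := mul_le_mul_of_nonneg_left e5 (mul_nonneg hp0.le hq0.le)
    have e6' := mul_le_mul_of_nonneg_left e6 (mul_nonneg hq0.le hq0.le)
    linarith

end GoodSeq

/-- Coefficients indexed by the integers. -/
noncomputable def zcoeff (g : ℝ[X]) (m : ℤ) : ℝ := if m < 0 then 0 else g.coeff m.toNat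

lemma zcoeff_add (f g : ℝ[X]) (m : ℤ) : zcoeff (f + g) m = zcoeff f m + zcoeff g m := by
  unfold zcoeff; split_ifs <;> simp

lemma zcoeff_C_mul (a : ℝ) (g : ℝ[X]) (m : ℤ) : zcoeff (C a * g) m = a * zcoeff g m := by
  unfold zcoeff; split_ifs <;> simp

lemma zcoeff_X_mul (g : ℝ[X]) (m : ℤ) : zcoeff (X * g) m = zcoeff g (m - 1) := by
  unfold zcoeff
  rcases lt_trichotomy m 0 with h | h | h
  · rw [if_pos h, if_pos (by omega)]
  · subst h; simp
  · rw [if_neg (by omega), if_neg (by omega)]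
    obtain ⟨k, rfl⟩ : ∃ k : ℕ, m = k + 1 := ⟨(m - 1).toNat, by omega⟩
    rw [show ((k : ℤ) + 1).toNat = k + 1 by omega, show ((k : ℤ) + 1 - 1).toNat = k by omega,
      coeff_X_mul]

lemma good_of_stable (n : ℕ) : ∀ g : ℝ[X], g.Monic → g.natDegree = n →
    (∀ z : ℂ, aeval z g = 0 → z.re < 0) → GoodSeq n (zcoeff g) := by
  induction n using Nat.strong_induction_on with
  | _ n ih =>
  intro g hm hd hz
  rcases Nat.eq_zero_or_pos n with hn | hn
  · subst hn
    rw [hm.natDegree_eq_zero.mp hd]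
    have key : ∀ m : ℤ, zcoeff 1 m = if m = 0 then 1 else 0 := by
      intro m
      unfold zcoeff
      rw [coeff_one]
      split_ifs <;> first | rfl | omega
    refine ⟨fun m h0 h1 => ?_, fun m h0 => ?_, fun m h0 => ?_, fun i j hij hp => ?_⟩
    · rw [key, if_pos (by push_cast at h1; omega)]; exact one_pos
    · rw [key, if_neg (by omega)]
    · rw [key, if_neg (by push_cast at h0; omega)]
    · simp only [key]
      split_ifs <;> first | omega | simp
  · obtain ⟨z, hz0⟩ : ∃ z : ℂ, aeval z g = 0 := by
      refine IsAlgClosed.exists_aeval_eq_zero ℂ g ?_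
      rw [degree_eq_natDegree hm.ne_zero, hd]
      exact_mod_cast hn.ne'
    have hre := hz z hz0
    by_cases him : z.im = 0
    · have hzr : z = ((z.re : ℝ) : ℂ) := by apply Complex.ext <;> simp [him]
      have hroot : g.IsRoot z.re := by
        rw [hzr] at hz0
        have : (aeval ((algebraMap ℝ ℂ) z.re)) g = 0 := hz0
        rw [aeval_algebraMap_apply] at this
        simpa using this
      obtain ⟨f, hf⟩ := dvd_iff_isRoot.mpr hroot
      have hfm : f.Monic := (monic_X_sub_C z.re).of_mul_monic_left (hf ▸ hm)
      have hdf : n = 1 + f.natDegree := by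
        rw [← hd, hf, (monic_X_sub_C z.re).natDegree_mul hfm, natDegree_X_sub_C]
      have h := ih f.natDegree (by omega) f hfm rfl
        (fun w hw => hz w (by rw [hf, map_mul, hw, mul_zero]))
      have h2 := h.linear (by omega) (-z.re) (by linarith)
      have e : zcoeff g = fun m => zcoeff f (m - 1) + -z.re * zcoeff f m := by
        funext m
        rw [hf, show (X - C z.re) * f = X * f + C (-z.re) * f by rw [C_neg]; ring,
          zcoeff_add, zcoeff_X_mul, zcoeff_C_mul]
      rw [e, hdf]
      convert h2 using 1
      push_cast; ring
    · obtain ⟨f, hf⟩ := quadratic_dvd_of_aeval_eq_zero_im_ne_zero g hz0 him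
      have hqd : (X ^ 2 - C (2 * z.re) * X + C (‖z‖ ^ 2) : ℝ[X]) =
        C 1 * X ^ 2 + C (-(2 * z.re)) * X + C (‖z‖ ^ 2) := by rw [C_neg, C_1]; ring
      have hqdeg : (X ^ 2 - C (2 * z.re) * X + C (‖z‖ ^ 2) : ℝ[X]).natDegree = 2 := by
        rw [hqd]; exact natDegree_quadratic one_ne_zero
      have hqm : (X ^ 2 - C (2 * z.re) * X + C (‖z‖ ^ 2) : ℝ[X]).Monic := by
        rw [hqd]; exact leadingCoeff_quadratic one_ne_zero
      have hfm : f.Monic := hqm.of_mul_monic_left (hf ▸ hm)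
      have hdf : n = 2 + f.natDegree := by
        rw [← hd, hf, hqm.natDegree_mul hfm, hqdeg]
      have h := ih f.natDegree (by omega) f hfm rfl
        (fun w hw => hz w (by rw [hf, map_mul, hw, mul_zero]))
      have hz1 : z ≠ 0 := fun h => him (by simp [h])
      have h2 := h.quadratic (by omega) (-(2 * z.re)) (‖z‖ ^ 2) (by linarith)
        (by positivity)
      have e : zcoeff g = fun m => zcoeff f (m - 2) + -(2 * z.re) * zcoeff f (m - 1)
          + ‖z‖ ^ 2 * zcoeff f m := by
        funext m
        rw [hf, hqd, show (C 1 * X ^ 2 + C (-(2 * z.re)) * X + C (‖z‖ ^ 2)) * f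
          = X * (X * f) + C (-(2 * z.re)) * (X * f) + C (‖z‖ ^ 2) * f by rw [C_1]; ring,
          zcoeff_add, zcoeff_add, zcoeff_X_mul, zcoeff_X_mul, zcoeff_C_mul, zcoeff_C_mul,
          zcoeff_X_mul, show m - 1 - 1 = m - 2 by ring]
      rw [e, hdf]
      convert h2 using 1
      push_cast; ring

lemma taylor_monic_aux (ε : ℝ) (g : ℝ[X]) (hm : g.Monic) : (taylor ε g).Monic := by
  rw [taylor_apply]
  exact hm.comp_X_add_C ε

lemma closed_ineq (g : ℝ[X]) (hm : g.Monic)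
    (hz : ∀ z : ℂ, aeval z g = 0 → z.re ≤ 0) (i j : ℕ) (hi : 1 ≤ i) (hij : i < j)
    (hp : (j - i) % 2 = 1) :
    g.coeff (i - 1) * g.coeff (j + 1) ≤ g.coeff i * g.coeff j := by
  have key : ∀ ε : ℝ, 0 < ε → (taylor ε g).coeff (i - 1) * (taylor ε g).coeff (j + 1) ≤
      (taylor ε g).coeff i * (taylor ε g).coeff j := by
    intro ε hε
    have hs : ∀ z : ℂ, aeval z (taylor ε g) = 0 → z.re < 0 := by
      intro z h
      rw [taylor_apply, aeval_comp] at h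
      have := hz _ h
      simp at this
      linarith
    have h := (good_of_stable _ (taylor ε g) ((taylor_monic_aux ε g hm)) rfl hs).ineq i j
      (by omega) (by omega)
    unfold zcoeff at h
    rw [if_neg (by omega), if_neg (by omega), if_neg (by omega), if_neg (by omega)] at h
    simpa [show ((i : ℤ) - 1).toNat = i - 1 by omega,
      show ((j : ℤ) + 1).toNat = j + 1 by omega] using h
  have hc : ∀ m, Filter.Tendsto (fun ε : ℝ => (taylor ε g).coeff m)
      (nhdsWithin 0 (Set.Ioi 0)) (nhds (g.coeff m)) := by
    intro m
    have h1 : (fun ε : ℝ => (taylor ε g).coeff m) = fun ε => (hasseDeriv m g).eval ε := by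
      funext ε; rw [taylor_coeff]
    have h2 : g.coeff m = (hasseDeriv m g).eval 0 := by
      rw [← taylor_coeff, taylor_zero]
    rw [h1, h2]
    exact ((hasseDeriv m g).continuous.tendsto 0).mono_left nhdsWithin_le_nhds
  refine le_of_tendsto_of_tendsto ((hc (i - 1)).mul (hc (j + 1))) ((hc i).mul (hc j)) ?_
  filter_upwards [self_mem_nhdsWithin] with ε hε
  exact key ε hε

/-- **Newton-like inequalities** (Theorem 4.4).  Let
`g(x) = ∏_{j=1}^n (x - xⱼ) = xⁿ + b₁xⁿ⁻¹ + ⋯ + bₙ` be a real polynomial where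
`x₁, …, xₙ` are complex numbers with `Re(xⱼ) ≤ 0` for all `j` (and `b₀ = 1`).  If
`1 ≤ k < l ≤ n - 1` and `k`, `l` have different parity, then `b_k·b_l ≥ b_{k-1}·b_{l+1}`.
(Here `b_i` is the coefficient of `x^{n-i}` in `g`.) -/
theorem newton_like_inequalities
    (n k l : ℕ) (g : Polynomial ℝ) (x : ℕ → ℂ)
    (hdeg : g.natDegree = n)
    (hroots : g.map (algebraMap ℝ ℂ) =
      ∏ j ∈ Finset.Icc 1 n, (Polynomial.X - Polynomial.C (x j)))
    (hx : ∀ j ∈ Finset.Icc 1 n, (x j).re ≤ 0)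
    (hk : 1 ≤ k) (hkl : k < l) (hl : l ≤ n - 1) (hpar : k % 2 ≠ l % 2) :
    g.coeff (n - (k - 1)) * g.coeff (n - (l + 1)) ≤ g.coeff (n - k) * g.coeff (n - l) := by
  have hm : g.Monic := by
    have h1 : (g.map (algebraMap ℝ ℂ)).Monic := by
      rw [hroots]; exact monic_prod_of_monic _ _ (fun j _ => monic_X_sub_C (x j))
    exact monic_of_injective (algebraMap ℝ ℂ).injective h1
  have hz : ∀ z : ℂ, aeval z g = 0 → z.re ≤ 0 := by
    intro z h
    rw [← eval_map_algebraMap, hroots, eval_prod, Finset.prod_eq_zero_iff] at h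
    obtain ⟨j, hj, h⟩ := h
    simp [sub_eq_zero] at h
    rw [h]; exact hx j hj
  have h := closed_ineq g hm hz (n - l) (n - k) (by omega) (by omega) (by omega)
  rw [show n - l - 1 = n - (l + 1) by omega, show n - k + 1 = n - (k - 1) by omega] at h
  linarith
end

section
/- Let f(x) = a_0 x^n + a_1 x^{n-1} + ... + a_n be a real polynomial of degree n ≥ 1 with a_0 > 0, and write f(x) = p(x²) + x·q(x²), where p(x²) and x·q(x²) are the parts of f made up of the even and odd powers of x respectively. If f is Hurwitz stable (every complex root of f has negative real part), then: every root of the polynomial p(-x²) is real and simple, every root of q(-x²) is real and simple, a_1 > 0, and the distinct nonnegative real roots x_{e1} < x_{e2} < ... of p(-x²) and the distinct nonnegative real roots x_{o1} < x_{o2} < ... of q(-x²) satisfy 0 < x_{e1} < x_{o1} < x_{e2} < x_{o2} < ... (i.e., they strictly alternate, beginning with the smallest root of p(-x²)). -/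
open Polynomial

lemma hb_enum (s : Finset ℝ) : ∃ x : ℕ → ℝ, StrictMonoOn x (Set.Iio s.card) ∧
    (s : Set ℝ) = x '' Set.Iio s.card := by
  refine ⟨fun i => if h : i < s.card then s.orderEmbOfFin rfl ⟨i, h⟩ else 0, ?_, ?_⟩
  · intro i hi j hj hij
    simp only [Set.mem_Iio] at hi hj
    simp only [hi, hj, dif_pos]
    exact (s.orderEmbOfFin rfl).strictMono hij
  · rw [← Finset.range_orderEmbOfFin s rfl]
    ext y
    constructor
    · rintro ⟨i, rfl⟩
      exact ⟨i, i.2, by simp⟩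
    · rintro ⟨i, hi, rfl⟩
      simp only [Set.mem_Iio] at hi
      exact ⟨⟨i, hi⟩, by simp [hi]⟩

lemma hb_comb (A B : Set ℝ) (hA : A.Finite) (hB : B.Finite)
    (hA0 : ∀ a ∈ A, 0 < a) (hB0 : ∀ b ∈ B, 0 < b)
    (h1 : ∀ a ∈ A, ∀ b ∈ A, a < b → ∃ c ∈ B, a < c ∧ c < b)
    (h2 : ∀ a ∈ B, ∀ b ∈ B, a < b → ∃ c ∈ A, a < c ∧ c < b)
    (h3 : ∀ b ∈ B, ∃ c ∈ A, c < b) :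
    ∃ (se so : ℕ) (xe xo : ℕ → ℝ),
      StrictMonoOn xe (Set.Iio se) ∧ StrictMonoOn xo (Set.Iio so) ∧
      A = xe '' (Set.Iio se) ∧
      B = xo '' (Set.Iio so) ∧
      so ≤ se ∧ se ≤ so + 1 ∧
      (∀ i, i < se → 0 < xe i) ∧
      (∀ i, i < so → xe i < xo i) ∧
      (∀ i, i + 1 < se → xo i < xe (i + 1)) := by
  obtain ⟨xe, me, he⟩ := hb_enum hA.toFinset
  obtain ⟨xo, mo, ho⟩ := hb_enum hB.toFinset
  generalize hA.toFinset.card = se at *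
  generalize hB.toFinset.card = so at *
  simp only [Set.Finite.coe_toFinset] at he ho
  subst he ho
  have k1 : ∀ i, i < so → i < se ∧ xe i < xo i := by
    intro i
    induction i with
    | zero =>
      intro h
      obtain ⟨_, ⟨j, hj, rfl⟩, hc⟩ := h3 _ ⟨0, h, rfl⟩
      simp only [Set.mem_Iio] at hj
      have h0 : 0 < se := by omega
      exact ⟨h0, lt_of_le_of_lt (me.monotoneOn h0 hj (Nat.zero_le j)) hc⟩
    | succ i ih =>
      intro h
      have hi : i < so := by omega
      obtain ⟨a1, a2⟩ := ih hi
      obtain ⟨_, ⟨j, hj, rfl⟩, c1, c2⟩ := h2 _ ⟨i, hi, rfl⟩ _ ⟨i+1, h, rfl⟩ (mo hi h (Nat.lt_succ_self i))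
      have hj' : j < se := hj
      have : i < j := by
        by_contra hc
        have := me.monotoneOn hj a1 (not_lt.1 hc)
        linarith
      have h0 : i + 1 < se := by omega
      exact ⟨h0, lt_of_le_of_lt (me.monotoneOn h0 hj this) c2⟩
  have k2 : ∀ i, i + 1 < se → i < so ∧ xo i < xe (i + 1) := by
    intro i
    induction i with
    | zero =>
      intro h
      have h' : 0 < se := by omega
      obtain ⟨_, ⟨j, hj, rfl⟩, c1, c2⟩ := h1 _ ⟨0, h', rfl⟩ _ ⟨0+1, h, rfl⟩ (me h' h (Nat.lt_succ_self 0))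
      have hj' : j < so := hj
      have h0 : 0 < so := by omega
      exact ⟨h0, lt_of_le_of_lt (mo.monotoneOn h0 hj (Nat.zero_le j)) c2⟩
    | succ i ih =>
      intro h
      have hi : i + 1 < se := by omega
      obtain ⟨a1, a2⟩ := ih hi
      obtain ⟨_, ⟨j, hj, rfl⟩, c1, c2⟩ := h1 _ ⟨i+1, hi, rfl⟩ _ ⟨i+1+1, h, rfl⟩ (me hi h (Nat.lt_succ_self _))
      have hj' : j < so := hj
      have : i < j := by
        by_contra hc
        have := mo.monotoneOn hj a1 (not_lt.1 hc)
        linarith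
      have h0 : i + 1 < so := by omega
      exact ⟨h0, lt_of_le_of_lt (mo.monotoneOn h0 hj this) c2⟩
  refine ⟨se, so, xe, xo, me, mo, rfl, rfl, ?_, ?_, fun i hi => hA0 _ ⟨i, hi, rfl⟩,
    fun i hi => (k1 i hi).2, fun i hi => (k2 i hi).2⟩
  · by_contra hc
    have := (k1 se (by omega)).1
    omega
  · by_contra hc
    have := (k2 so (by omega)).1
    omega

lemma hb_rolle (g h : ℝ[X])
    (hW : ∀ x : ℝ, 0 < h.derivative.eval x * g.eval x - g.derivative.eval x * h.eval x)
    (a b : ℝ) (hab : a < b) (ha : h.eval a = 0) (hb : h.eval b = 0) :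
    ∃ c, g.eval c = 0 ∧ a < c ∧ c < b := by
  by_contra! hc
  have hg : ∀ x ∈ Set.Icc a b, g.eval x ≠ 0 := by
    intro x hx h0
    have hxa : a ≠ x := by
      rintro rfl
      have := hW a
      simp [h0, ha] at this
    have h1 := hc x h0 (lt_of_le_of_ne hx.1 hxa)
    have : x = b := le_antisymm hx.2 h1
    subst this
    have := hW x
    simp [h0, hb] at this
  have hm : StrictMonoOn (fun x => h.eval x / g.eval x) (Set.Icc a b) := by
    apply strictMonoOn_of_deriv_pos (convex_Icc a b)
    · exact h.continuous.continuousOn.div g.continuous.continuousOn hg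
    · intro x hx
      have hx' := hg x (interior_subset hx)
      rw [((h.hasDerivAt x).fun_div (g.hasDerivAt x) hx').deriv]
      have := hW x
      have : 0 < g.eval x ^ 2 := by positivity
      apply div_pos _ this
      linarith [hW x]
  have := hm (Set.left_mem_Icc.2 hab.le) (Set.right_mem_Icc.2 hab.le) hab
  simp [ha, hb] at this

lemma hb_prod (s : ℂ) (hs : 0 < s.re) (m : Multiset ℂ) (hm : ∀ r ∈ m, r.re < 0) :
    0 < (m.map (fun r => ‖s - r‖)).prod ∧
    (m.map (fun r => ‖-(starRingEnd ℂ) s - r‖)).prod ≤ (m.map (fun r => ‖s - r‖)).prod ∧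
    (m ≠ 0 → (m.map (fun r => ‖-(starRingEnd ℂ) s - r‖)).prod < (m.map (fun r => ‖s - r‖)).prod) := by
  induction m using Multiset.induction_on with
  | empty => simp
  | cons r m ih =>
    obtain ⟨i1, i2, -⟩ := ih (fun r hr => hm r (Multiset.mem_cons_of_mem hr))
    have hr := hm r (Multiset.mem_cons_self r m)
    have key : ‖-(starRingEnd ℂ) s - r‖ < ‖s - r‖ := by
      apply lt_of_pow_lt_pow_left₀ 2 (norm_nonneg _)
      rw [← Complex.normSq_eq_norm_sq, ← Complex.normSq_eq_norm_sq, Complex.normSq_apply, Complex.normSq_apply]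
      simp
      nlinarith
    have h0 : 0 < ‖s - r‖ := lt_of_le_of_lt (norm_nonneg _) key
    have : ‖-(starRingEnd ℂ) s - r‖ * (m.map (fun r => ‖-(starRingEnd ℂ) s - r‖)).prod <
        ‖s - r‖ * (m.map (fun r => ‖s - r‖)).prod :=
      lt_of_le_of_lt (mul_le_mul_of_nonneg_left i2 (norm_nonneg _)) (mul_lt_mul_of_pos_right key i1)
    simp only [Multiset.map_cons, Multiset.prod_cons]
    exact ⟨by positivity, this.le, fun _ => this⟩

lemma hb_sum (φ : ℂ → ℂ) (m : Multiset ℂ) (hm : ∀ r ∈ m, 0 < (φ r).re) :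
    0 ≤ (m.map φ).sum.re ∧ (m ≠ 0 → 0 < (m.map φ).sum.re) := by
  induction m using Multiset.induction_on with
  | empty => simp
  | cons r m ih =>
    obtain ⟨i1, -⟩ := ih (fun r hr => hm r (Multiset.mem_cons_of_mem hr))
    have hr := hm r (Multiset.mem_cons_self r m)
    simp only [Multiset.map_cons, Multiset.sum_cons, Complex.add_re]
    exact ⟨by linarith, fun _ => by linarith⟩

lemma hb_eval_conj (f : ℝ[X]) (z : ℂ) :
    (f.map (algebraMap ℝ ℂ)).eval ((starRingEnd ℂ) z) =
      (starRingEnd ℂ) ((f.map (algebraMap ℝ ℂ)).eval z) := by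
  rw [eval_map_algebraMap, eval_map_algebraMap]
  exact Polynomial.aeval_conj f z

lemma hb_norm (f : ℝ[X]) (hf : f ≠ 0)
    (hr0 : (f.map (algebraMap ℝ ℂ)).roots ≠ 0)
    (hstable : ∀ z ∈ (f.map (algebraMap ℝ ℂ)).roots, z.re < 0) (s : ℂ) (hs : 0 < s.re) :
    ‖(f.map (algebraMap ℝ ℂ)).eval (-s)‖ < ‖(f.map (algebraMap ℝ ℂ)).eval s‖ := by
  have h1 : ‖(f.map (algebraMap ℝ ℂ)).eval (-s)‖ =
      ‖(f.map (algebraMap ℝ ℂ)).eval (-(starRingEnd ℂ) s)‖ := by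
    rw [← map_neg, hb_eval_conj, Complex.norm_conj]
  have hsp : (f.map (algebraMap ℝ ℂ)).Splits := IsAlgClosed.splits _
  have key : ∀ t : ℂ, ‖(f.map (algebraMap ℝ ℂ)).eval t‖ =
      ‖(f.map (algebraMap ℝ ℂ)).leadingCoeff‖ *
        ((f.map (algebraMap ℝ ℂ)).roots.map (fun r => ‖t - r‖)).prod := by
    intro t
    rw [hsp.eval_eq_prod_roots, norm_mul]
    congr 1
    have := map_multiset_prod (normHom : ℂ →*₀ ℝ) ((f.map (algebraMap ℝ ℂ)).roots.map (fun r => t - r))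
    rw [Multiset.map_map] at this
    exact this
  rw [h1, key, key]
  apply mul_lt_mul_of_pos_left ((hb_prod s hs _ hstable).2.2 hr0)
  rw [norm_pos_iff, leadingCoeff_ne_zero]
  exact (Polynomial.map_ne_zero_iff (algebraMap ℝ ℂ).injective).2 hf

lemma hb_eval_real (g : ℝ[X]) (x : ℝ) :
    (g.map (algebraMap ℝ ℂ)).eval (x : ℂ) = ((g.eval x : ℝ) : ℂ) := by
  simp [eval_map_algebraMap, ← Complex.coe_algebraMap, Polynomial.aeval_algebraMap_apply]

lemma hb_simple (g : ℝ[X]) (z : ℂ) (hz : z ∈ (g.map (algebraMap ℝ ℂ)).roots) (hi : z.im = 0)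
    (hd : ∀ x : ℝ, g.eval x = 0 → g.derivative.eval x ≠ 0) :
    (g.map (algebraMap ℝ ℂ)).roots.count z = 1 := by
  obtain ⟨x, rfl⟩ : ∃ x : ℝ, z = x := ⟨z.re, by apply Complex.ext <;> simp [hi]⟩
  have h0 := ne_zero_of_mem_roots hz
  have hx : g.eval x = 0 := by
    have := isRoot_of_mem_roots hz
    rw [IsRoot, hb_eval_real] at this
    exact_mod_cast this
  rw [count_roots]
  have h1 : 0 < rootMultiplicity (x : ℂ) (g.map (algebraMap ℝ ℂ)) :=
    (rootMultiplicity_pos h0).2 (isRoot_of_mem_roots hz)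
  have h2 : ¬ 1 < rootMultiplicity (x : ℂ) (g.map (algebraMap ℝ ℂ)) := by
    rw [one_lt_rootMultiplicity_iff_isRoot h0]
    rintro ⟨-, h⟩
    rw [derivative_map, IsRoot, hb_eval_real] at h
    exact hd x hx (by exact_mod_cast h)
  omega

lemma hb_wronskian (f g h : ℝ[X])
    (hr0 : (f.map (algebraMap ℝ ℂ)).roots ≠ 0)
    (hstable : ∀ z ∈ (f.map (algebraMap ℝ ℂ)).roots, z.re < 0)
    (hgh : (f.map (algebraMap ℝ ℂ)).comp (C Complex.I * X) =
      g.map (algebraMap ℝ ℂ) + C Complex.I * h.map (algebraMap ℝ ℂ)) (x : ℝ) :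
    0 < h.derivative.eval x * g.eval x - g.derivative.eval x * h.eval x := by
  have hsp : (f.map (algebraMap ℝ ℂ)).Splits := IsAlgClosed.splits _
  have e1 := congrArg (fun P => P.eval (x : ℂ)) hgh
  have e2 := congrArg (fun P => (derivative P).eval (x : ℂ)) hgh
  simp only [derivative_comp, derivative_add, derivative_mul, derivative_C, derivative_X, eval_add,
    eval_mul, eval_comp, eval_C, eval_X, zero_mul, mul_one, zero_add, eval_zero, derivative_map,
    eval_one, hb_eval_real] at e1 e2
  have hne0 : f.map (algebraMap ℝ ℂ) ≠ 0 := by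
    intro h
    simp [h] at hr0
  have hne : (f.map (algebraMap ℝ ℂ)).eval (Complex.I * x) ≠ 0 := by
    intro h
    have := hstable _ ((mem_roots hne0).2 h)
    simp at this
  have hd := hsp.eval_derivative_div_eval_of_ne_zero hne
  have hpos := (hb_sum (fun z => 1 / (Complex.I * x - z)) _ (by
    intro r hr
    have := hstable r hr
    have hh : Complex.I * x - r ≠ 0 := by
      intro h
      have := congrArg Complex.re h
      simp at this
      linarith
    rw [one_div, Complex.inv_re]
    apply div_pos
    · simp; linarith
    · exact Complex.normSq_pos.2 hh)).2 hr0
  rw [← hd, derivative_map] at hpos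
  have e3 : (f.derivative.map (algebraMap ℝ ℂ)).eval (Complex.I * x) =
      (h.derivative.eval x : ℝ) - Complex.I * (g.derivative.eval x : ℝ) := by
    linear_combination (-Complex.I) * e2 + ((h.derivative.eval x : ℝ) - (f.derivative.map (algebraMap ℝ ℂ)).eval (Complex.I * x) : ℂ) * (-Complex.I_sq)
  rw [e1] at hne hpos
  rw [e3, Complex.div_re, ← add_div] at hpos
  have hn := Complex.normSq_pos.2 hne
  have := (div_pos_iff_of_pos_right hn).1 hpos
  simp at this
  linarith

theorem hermite_biehler_necessity
    (f p q pe qe : Polynomial ℝ)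
    (hn : 1 ≤ f.natDegree)
    (hlead : 0 < f.leadingCoeff)
    (hpq : f = p.comp (Polynomial.X ^ 2) + Polynomial.X * q.comp (Polynomial.X ^ 2))
    (hpe : pe = p.comp (-(Polynomial.X ^ 2)))
    (hqe : qe = q.comp (-(Polynomial.X ^ 2)))
    (hstable : ∀ z ∈ (f.map (algebraMap ℝ ℂ)).roots, z.re < 0) :
    (∀ z ∈ (pe.map (algebraMap ℝ ℂ)).roots,
      z.im = 0 ∧ (pe.map (algebraMap ℝ ℂ)).roots.count z = 1) ∧
    (∀ z ∈ (qe.map (algebraMap ℝ ℂ)).roots,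
      z.im = 0 ∧ (qe.map (algebraMap ℝ ℂ)).roots.count z = 1) ∧
    0 < f.coeff (f.natDegree - 1) ∧
    ∃ (se so : ℕ) (xe xo : ℕ → ℝ),
      StrictMonoOn xe (Set.Iio se) ∧ StrictMonoOn xo (Set.Iio so) ∧
      {x : ℝ | 0 ≤ x ∧ pe.IsRoot x} = xe '' (Set.Iio se) ∧
      {x : ℝ | 0 ≤ x ∧ qe.IsRoot x} = xo '' (Set.Iio so) ∧
      so ≤ se ∧ se ≤ so + 1 ∧
      (∀ i, i < se → 0 < xe i) ∧
      (∀ i, i < so → xe i < xo i) ∧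
      (∀ i, i + 1 < se → xo i < xe (i + 1)) := by
  have hf0 : f ≠ 0 := by
    rintro rfl
    simp at hn
  have hsp : (f.map (algebraMap ℝ ℂ)).Splits := IsAlgClosed.splits _
  have hr0 : (f.map (algebraMap ℝ ℂ)).roots ≠ 0 := by
    intro h
    have := hsp.natDegree_eq_card_roots
    rw [h, natDegree_map] at this
    simp at this
    omega
  have hgh : (f.map (algebraMap ℝ ℂ)).comp (C Complex.I * X) =
      pe.map (algebraMap ℝ ℂ) + C Complex.I * (X * qe).map (algebraMap ℝ ℂ) := by
    have hI : (C Complex.I * X : ℂ[X]) ^ 2 = -X ^ 2 := by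
      rw [mul_pow, ← C_pow, Complex.I_sq]; simp
    rw [hpq, hpe, hqe]
    simp only [Polynomial.map_add, Polynomial.map_mul, Polynomial.map_comp, Polynomial.map_pow,
      Polynomial.map_neg, map_X, add_comp, mul_comp, comp_assoc, X_comp, pow_comp, X_pow_comp, hI]
    ring
  have hW := hb_wronskian f pe (X * qe) hr0 hstable hgh
  have hnorm := hb_norm f hf0 hr0 hstable
  have hnorm' : ∀ s : ℂ, ‖(f.map (algebraMap ℝ ℂ)).eval (-s)‖ =
      ‖(f.map (algebraMap ℝ ℂ)).eval s‖ → s.re = 0 := by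
    intro s h
    rcases lt_trichotomy s.re 0 with h1 | h1 | h1
    · have := hnorm (-s) (by simpa using h1)
      rw [neg_neg] at this
      linarith
    · exact h1
    · have := hnorm s h1
      linarith
  have hfe : ∀ z : ℂ, (f.map (algebraMap ℝ ℂ)).eval (Complex.I * z) =
      (pe.map (algebraMap ℝ ℂ)).eval z + Complex.I * (z * (qe.map (algebraMap ℝ ℂ)).eval z) := by
    intro z
    have := congrArg (fun P => P.eval z) hgh
    simpa only [eval_comp, eval_add, eval_mul, eval_C, eval_X, Polynomial.map_mul, map_X] using this
  have hpev : ∀ z : ℂ, (pe.map (algebraMap ℝ ℂ)).eval (-z) = (pe.map (algebraMap ℝ ℂ)).eval z := by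
    intro z; simp [hpe, Polynomial.map_comp]
  have hqev : ∀ z : ℂ, (qe.map (algebraMap ℝ ℂ)).eval (-z) = (qe.map (algebraMap ℝ ℂ)).eval z := by
    intro z; simp [hqe, Polynomial.map_comp]
  have hq0 : ∀ x : ℝ, (X * qe).eval x = x * qe.eval x := by intro x; simp
  refine ⟨?_, ?_, ?_, ?_⟩
  · intro z hz
    have hi : z.im = 0 := by
      have h0 : (pe.map (algebraMap ℝ ℂ)).eval z = 0 := isRoot_of_mem_roots hz
      have := hnorm' (Complex.I * z) (by
        rw [← mul_neg, hfe, hfe, hpev, hqev, h0]; simp)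
      simpa using this
    refine ⟨hi, hb_simple pe z hz hi ?_⟩
    intro x h1 h2
    have := hW x
    simp [h1, h2] at this
  · intro z hz
    have hi : z.im = 0 := by
      have h0 : (qe.map (algebraMap ℝ ℂ)).eval z = 0 := isRoot_of_mem_roots hz
      have := hnorm' (Complex.I * z) (by
        rw [← mul_neg, hfe, hfe, hpev, hqev, h0]; simp)
      simpa using this
    refine ⟨hi, hb_simple qe z hz hi ?_⟩
    intro x h1 h2
    have := hW x
    simp [h1, h2] at this
  · have h1 := hsp.nextCoeff_eq_neg_sum_roots_mul_leadingCoeff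
    rw [nextCoeff_map (algebraMap ℝ ℂ).injective, nextCoeff_of_natDegree_pos hn,
      leadingCoeff_map] at h1
    have h2 := (hb_sum (fun z => -z) _ (fun r hr => by
      have := hstable r hr
      simpa using this)).2 hr0
    rw [Multiset.sum_map_neg] at h2
    have h3 := congrArg Complex.re h1
    simp at h3 h2
    rw [h3]
    nlinarith
  · have hpe0 : pe ≠ 0 := by
      rintro h
      have := hW 0
      simp [h] at this
    have hqe0 : qe ≠ 0 := by
      rintro h
      have := hW 0
      simp [h] at this
    have hW' : ∀ x : ℝ, 0 < (-pe).derivative.eval x * (X * qe).eval x -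
        (X * qe).derivative.eval x * (-pe).eval x := by
      intro x
      have := hW x
      rw [derivative_neg, eval_neg, eval_neg]
      linarith
    apply hb_comb
    · exact (Polynomial.finite_setOf_isRoot hpe0).subset (fun x hx => hx.2)
    · exact (Polynomial.finite_setOf_isRoot hqe0).subset (fun x hx => hx.2)
    · rintro a ⟨h1, h2⟩
      refine lt_of_le_of_ne h1 ?_
      rintro rfl
      have := hW 0
      rw [IsRoot] at h2
      simp [h2] at this
    · rintro a ⟨h1, h2⟩
      refine lt_of_le_of_ne h1 ?_
      rintro rfl
      have := hW 0
      rw [IsRoot] at h2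
      simp [h2] at this
    · rintro a ⟨a1, a2⟩ b ⟨b1, b2⟩ hab
      rw [IsRoot] at a2 b2
      obtain ⟨c, hc, h1, h2⟩ := hb_rolle (X * qe) (-pe) hW' a b hab (by simp [a2]) (by simp [b2])
      have hc0 : 0 < c := by linarith
      rw [hq0] at hc
      exact ⟨c, ⟨hc0.le, (mul_eq_zero.1 hc).resolve_left hc0.ne'⟩, h1, h2⟩
    · rintro a ⟨a1, a2⟩ b ⟨b1, b2⟩ hab
      rw [IsRoot] at a2 b2
      obtain ⟨c, hc, h1, h2⟩ := hb_rolle pe (X * qe) hW a b hab (by simp [a2]) (by simp [b2])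
      exact ⟨c, ⟨by linarith, hc⟩, h1, h2⟩
    · rintro b ⟨b1, b2⟩
      rw [IsRoot] at b2
      have hb : 0 < b := by
        refine lt_of_le_of_ne b1 ?_
        rintro rfl
        have := hW 0
        simp [b2] at this
      obtain ⟨c, hc, h1, h2⟩ := hb_rolle pe (X * qe) hW 0 b hb (by simp) (by simp [b2])
      exact ⟨c, ⟨h1.le, hc⟩, h2⟩
end

section
/- Let f be a real polynomial of degree n with a simple positive real root r, and suppose every other root of f lies in the wedge S_{√3} := {-α + iβ : α > 0, |β| ≤ √3·α}. Then the sequence of coefficients a_0, a_1, ..., a_n of f (where f(x) = a_0 x^n + a_1 x^{n-1} + ... + a_n, a_0 ≠ 0) has precisely one sign change. -/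
open Polynomial

/-- The number of sign changes of the finite real sequence `c 0, c 1, …, c m`:
the number of pairs `i < j ≤ m` with `c i * c j < 0` and `c l = 0` for all `i < l < j`. -/
noncomputable def signChanges (m : ℕ) (c : ℕ → ℝ) : ℕ :=
  {p : ℕ × ℕ | p.1 < p.2 ∧ p.2 ≤ m ∧ c p.1 * c p.2 < 0 ∧
    ∀ l, p.1 < l → l < p.2 → c l = 0}.ncard

/-- Positive log-concave coefficients. -/
def LCPoly (g : Polynomial ℝ) : Prop :=
  (∀ k, k ≤ g.natDegree → 0 < g.coeff k) ∧
    ∀ k, g.coeff k * g.coeff (k + 2) ≤ g.coeff (k + 1) ^ 2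

lemma LCPoly.nonneg {g : Polynomial ℝ} (h : LCPoly g) (k : ℕ) : 0 ≤ g.coeff k := by
  by_cases hk : k ≤ g.natDegree
  · exact (h.1 k hk).le
  · rw [coeff_eq_zero_of_natDegree_lt (by omega)]

lemma LCPoly.minor {g : Polynomial ℝ} (h : LCPoly g) (i d : ℕ) :
    g.coeff i * g.coeff (i + d + 1) ≤ g.coeff (i + 1) * g.coeff (i + d) := by
  induction d with
  | zero => simp [mul_comm]
  | succ d ih =>
    by_cases hk : i + d ≤ g.natDegree
    · have hp := h.1 _ hk
      have h2 := h.2 (i + d)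
      have hi := h.nonneg i
      have hj := h.nonneg (i + d + 1)
      have e : i + (d + 1) + 1 = i + d + 2 := by ring
      have e' : i + (d + 1) = i + d + 1 := by ring
      rw [e, e']
      refine le_of_mul_le_mul_right ?_ hp
      nlinarith [mul_le_mul_of_nonneg_left h2 hi, mul_le_mul_of_nonneg_right ih hj]
    · rw [coeff_eq_zero_of_natDegree_lt (n := i + (d + 1) + 1) (by omega)]
      simp only [mul_zero]
      exact mul_nonneg (h.nonneg _) (h.nonneg _)

lemma LCPoly.minor' {g : Polynomial ℝ} (h : LCPoly g) (i j : ℕ) (hij : i ≤ j) :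
    g.coeff i * g.coeff (j + 1) ≤ g.coeff (i + 1) * g.coeff j := by
  obtain ⟨d, rfl⟩ := Nat.exists_eq_add_of_le hij
  exact h.minor i d

lemma lin_coeff_succ (g : Polynomial ℝ) (a : ℝ) (k : ℕ) :
    ((X + C a) * g).coeff (k + 1) = g.coeff k + a * g.coeff (k + 1) := by
  simp [add_mul]

lemma lin_coeff_zero (g : Polynomial ℝ) (a : ℝ) :
    ((X + C a) * g).coeff 0 = a * g.coeff 0 := by
  simp [add_mul]

lemma LCPoly.lin {g : Polynomial ℝ} (h : LCPoly g) (a : ℝ) (ha : 0 < a) :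
    LCPoly ((X + C a) * g) := by
  have hg : g ≠ 0 := by
    rintro rfl
    simpa using h.1 0 (by simp)
  have hd : ((X + C a) * g).natDegree = g.natDegree + 1 := by
    rw [natDegree_mul (X_add_C_ne_zero a) hg, natDegree_X_add_C, add_comm]
  refine ⟨?_, ?_⟩
  · intro k hk
    rw [hd] at hk
    rcases k with _ | k
    · rw [lin_coeff_zero]
      exact mul_pos ha (h.1 0 (by simp))
    · rw [lin_coeff_succ]
      have := h.1 k (by omega)
      have := mul_nonneg ha.le (h.nonneg (k + 1))
      linarith
  · have key : ∀ u v w x : ℝ, 0 ≤ a * (v * w - u * x) → u * w ≤ v ^ 2 → v * x ≤ w ^ 2 →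
        (u + a * v) * (w + a * x) ≤ (v + a * w) ^ 2 := by
      intro u v w x h1 h2 h3
      nlinarith [mul_le_mul_of_nonneg_left h3 (sq_nonneg a)]
    intro k
    rcases k with _ | k
    · rw [lin_coeff_zero, lin_coeff_succ, lin_coeff_succ]
      have := key 0 (g.coeff 0) (g.coeff 1) (g.coeff 2)
        (by have := mul_nonneg ha.le (mul_nonneg (h.nonneg 0) (h.nonneg 1)); simpa using this)
        (by simpa using sq_nonneg (g.coeff 0)) (h.2 0)
      simpa using this
    · rw [lin_coeff_succ, lin_coeff_succ, lin_coeff_succ]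
      exact key _ _ _ _ (mul_nonneg ha.le (sub_nonneg.2 (h.minor k 2))) (h.2 k) (h.2 (k + 1))

lemma quad_coeff_succ (g : Polynomial ℝ) (b c : ℝ) (k : ℕ) :
    ((X ^ 2 + C b * X + C c) * g).coeff (k + 2) =
      g.coeff k + b * g.coeff (k + 1) + c * g.coeff (k + 2) := by
  simp [add_mul, mul_assoc, coeff_X_pow_mul]

lemma quad_coeff_one (g : Polynomial ℝ) (b c : ℝ) :
    ((X ^ 2 + C b * X + C c) * g).coeff 1 = b * g.coeff 0 + c * g.coeff 1 := by
  have : (X ^ 2 * g).coeff 1 = 0 := by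
    rw [coeff_X_pow_mul']; simp
  have h2 : (X * g).coeff 1 = g.coeff 0 := coeff_X_mul g 0
  simp [add_mul, mul_assoc, this, h2]

lemma quad_coeff_zero (g : Polynomial ℝ) (b c : ℝ) :
    ((X ^ 2 + C b * X + C c) * g).coeff 0 = c * g.coeff 0 := by
  simp [add_mul, mul_assoc]

lemma quad_key (b c u v w x y : ℝ) (hb : 0 < b) (hc : 0 < c) (hbc : c ≤ b ^ 2)
    (h1 : u * w ≤ v ^ 2) (h2 : u * x ≤ v * w) (h3 : v * x ≤ w ^ 2)
    (h4 : u * y ≤ v * x) (h5 : v * y ≤ w * x) (h6 : w * y ≤ x ^ 2) :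
    (u + b * v + c * w) * (w + b * x + c * y) ≤ (v + b * w + c * x) ^ 2 := by
  have e : (v + b * w + c * x) ^ 2 - (u + b * v + c * w) * (w + b * x + c * y) =
    (v ^ 2 - u * w) + b * (v * w - u * x) + (b ^ 2 - c) * (w ^ 2 - v * x)
      + c * (v * x - u * y) + b * c * (w * x - v * y) + c ^ 2 * (x ^ 2 - w * y) := by ring
  have := mul_nonneg hb.le (sub_nonneg.2 h2)
  have := mul_nonneg (sub_nonneg.2 hbc) (sub_nonneg.2 h3)
  have := mul_nonneg hc.le (sub_nonneg.2 h4)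
  have := mul_nonneg (mul_pos hb hc).le (sub_nonneg.2 h5)
  have := mul_nonneg (sq_nonneg c) (sub_nonneg.2 h6)
  linarith

lemma LCPoly.quad {g : Polynomial ℝ} (h : LCPoly g) (b c : ℝ) (hb : 0 < b) (hc : 0 < c)
    (hbc : c ≤ b ^ 2) : LCPoly ((X ^ 2 + C b * X + C c) * g) := by
  have hg : g ≠ 0 := by
    rintro rfl
    simpa using h.1 0 (by simp)
  have hq : (X ^ 2 + C b * X + C c : Polynomial ℝ).natDegree = 2 := by
    compute_degree!
  have hd : ((X ^ 2 + C b * X + C c) * g).natDegree = g.natDegree + 2 := by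
    rw [natDegree_mul (by intro h0; rw [h0] at hq; simp at hq) hg, hq, add_comm]
  have h00 := h.1 0 (by simp)
  refine ⟨?_, ?_⟩
  · intro k hk
    rw [hd] at hk
    rcases k with _ | _ | k
    · rw [quad_coeff_zero]
      exact mul_pos hc h00
    · rw [quad_coeff_one]
      have := mul_pos hb h00
      have := mul_nonneg hc.le (h.nonneg 1)
      linarith
    · rw [quad_coeff_succ]
      have := h.1 k (by omega)
      have := mul_nonneg hb.le (h.nonneg (k + 1))
      have := mul_nonneg hc.le (h.nonneg (k + 2))
      linarith
  · intro k
    rcases k with _ | _ | k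
    · rw [quad_coeff_zero, quad_coeff_one, quad_coeff_succ]
      have := quad_key b c 0 0 (g.coeff 0) (g.coeff 1) (g.coeff 2) hb hc hbc
        (by simp) (by simp) (by simpa using sq_nonneg (g.coeff 0)) (by simp)
        (by simpa using mul_nonneg (h.nonneg 0) (h.nonneg 1)) (h.2 0)
      simpa using this
    · have := quad_key b c 0 (g.coeff 0) (g.coeff 1) (g.coeff 2) (g.coeff 3) hb hc hbc
        (by simpa using sq_nonneg (g.coeff 0))
        (by simpa using mul_nonneg (h.nonneg 0) (h.nonneg 1)) (h.2 0)
        (by simpa using mul_nonneg (h.nonneg 0) (h.nonneg 2)) (h.minor 0 2) (h.2 1)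
      have e3 := quad_coeff_succ g b c 1
      have e2 := quad_coeff_succ g b c 0
      have e1 := quad_coeff_one g b c
      norm_num at e1 e2 e3 this ⊢
      rw [e1, e2, e3]
      exact this
    · have e3 := quad_coeff_succ g b c (k + 2)
      have e2 := quad_coeff_succ g b c (k + 1)
      have e1 := quad_coeff_succ g b c k
      have hm : g.coeff k * g.coeff (k + 4) ≤ g.coeff (k + 1) * g.coeff (k + 3) := h.minor k 3
      have := quad_key b c _ _ _ _ _ hb hc hbc (h.2 k) (h.minor k 2) (h.2 (k + 1))
        hm (h.minor (k + 1) 2) (h.2 (k + 2))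
      rw [e1, e2, e3]
      exact this

lemma lc_of_wedge (N : ℕ) : ∀ g : Polynomial ℝ, g.natDegree = N → 0 < g.leadingCoeff →
    (∀ z : ℂ, aeval z g = 0 → z.re < 0 ∧ |z.im| ≤ Real.sqrt 3 * (-z.re)) → LCPoly g := by
  induction N using Nat.strong_induction_on with
  | _ N ih =>
    intro g hN hl hz
    have hg : g ≠ 0 := by
      rintro rfl
      simp at hl
    rcases Nat.eq_zero_or_pos N with h0 | hpos
    · obtain ⟨a, rfl⟩ := natDegree_eq_zero.1 (hN.trans h0)
      rw [leadingCoeff_C] at hl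
      refine ⟨?_, ?_⟩
      · intro k hk
        have : k = 0 := by simpa using hk
        simpa [this] using hl
      · intro k
        simp [coeff_C]
    · have hdeg : 0 < (g.map (algebraMap ℝ ℂ)).degree := by
        rw [degree_map]
        exact natDegree_pos_iff_degree_pos.1 (hN ▸ hpos)
      obtain ⟨z, hroot⟩ := Complex.exists_root hdeg
      have hza : aeval z g = 0 := by
        rwa [IsRoot.def, eval_map_algebraMap] at hroot
      obtain ⟨hre, him⟩ := hz z hza
      by_cases hi : z.im = 0
      · have hzr : z = ((z.re : ℝ) : ℂ) := by
          apply Complex.ext <;> simp [hi]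
        have hdvd : X - C z.re ∣ g := by
          rw [dvd_iff_isRoot, IsRoot.def]
          rw [hzr] at hza
          have h2 : aeval (algebraMap ℝ ℂ z.re) g = 0 := hza
          rw [aeval_algebraMap_apply] at h2
          simpa using h2
        obtain ⟨q, rfl⟩ := hdvd
        have hq : q ≠ 0 := right_ne_zero_of_mul hg
        have e : (X - C z.re : Polynomial ℝ) = X + C (-z.re) := by simp [sub_eq_add_neg]
        rw [natDegree_mul (X_sub_C_ne_zero _) hq, natDegree_X_sub_C] at hN
        rw [leadingCoeff_mul, leadingCoeff_X_sub_C, one_mul] at hl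
        have hL := ih q.natDegree (by omega) q rfl hl (fun w hw => hz w (by simp [hw]))
        rw [e]
        exact hL.lin _ (by linarith)
      · obtain ⟨q, rfl⟩ := quadratic_dvd_of_aeval_eq_zero_im_ne_zero g hza hi
        have hq : q ≠ 0 := right_ne_zero_of_mul hg
        have e : (X ^ 2 - C (2 * z.re) * X + C (‖z‖ ^ 2) : Polynomial ℝ) =
            X ^ 2 + C (-(2 * z.re)) * X + C (‖z‖ ^ 2) := by
          rw [C_neg]; ring
        have hd2 : (X ^ 2 + C (-(2 * z.re)) * X + C (‖z‖ ^ 2) : Polynomial ℝ).natDegree = 2 := by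
          compute_degree!
        have hm : (X ^ 2 + C (-(2 * z.re)) * X + C (‖z‖ ^ 2) : Polynomial ℝ).leadingCoeff = 1 := by
          rw [leadingCoeff, hd2]
          rw [coeff_add, coeff_add, coeff_C]
          simp [coeff_X]
        rw [e] at hN hl hz ⊢
        rw [natDegree_mul (by intro h0; rw [h0] at hd2; simp at hd2) hq, hd2] at hN
        rw [leadingCoeff_mul, hm, one_mul] at hl
        have hL := ih q.natDegree (by omega) q rfl hl
          (fun w hw => hz w (by rw [map_mul, hw, mul_zero]))
        have hn : ‖z‖ ^ 2 = z.re ^ 2 + z.im ^ 2 := by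
          rw [Complex.sq_norm, Complex.normSq_apply]; ring
        refine hL.quad _ _ (by linarith) ?_ ?_
        · rw [hn]
          have := sq_nonneg z.im
          have : 0 < z.re ^ 2 := by nlinarith
          linarith
        · rw [hn]
          have h3 : z.im ^ 2 ≤ (Real.sqrt 3 * (-z.re)) ^ 2 := by
            rw [← sq_abs]
            exact pow_le_pow_left₀ (abs_nonneg _) him 2
          rw [mul_pow, Real.sq_sqrt (by norm_num)] at h3
          nlinarith

lemma signChanges_one (n : ℕ) (e : ℕ → ℝ) (h0 : e 0 < 0) (hn : 0 < e n)
    (hm : ∀ i j, i < j → j ≤ n → 0 < e i → 0 ≤ e j) :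
    signChanges n (fun i => e (n - i)) = 1 := by
  classical
  have hA : ∃ A, A ≤ n ∧ e A < 0 ∧ ∀ k, k ≤ n → e k < 0 → k ≤ A := by
    have hne : ((Finset.range (n + 1)).filter (fun k => e k < 0)).Nonempty :=
      ⟨0, by simp [h0]⟩
    refine ⟨Finset.max' _ hne, ?_, ?_, fun k hk hek =>
      Finset.le_max' _ k (Finset.mem_filter.2 ⟨Finset.mem_range.2 (by omega), hek⟩)⟩
    · have := Finset.max'_mem _ hne
      have h1 := Finset.mem_range.1 (Finset.mem_filter.1 this).1
      omega
    · have := Finset.max'_mem _ hne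
      simp only [Finset.mem_filter] at this
      exact this.2
  obtain ⟨A, hAn, hA0, hAmax⟩ := hA
  have hex : ∃ B, 0 < e B := ⟨n, hn⟩
  have hB0 := Nat.find_spec hex
  have hBmin : ∀ k, 0 < e k → Nat.find hex ≤ k := fun k hk => Nat.find_min' hex hk
  generalize Nat.find hex = B at hB0 hBmin
  have hBn : B ≤ n := hBmin n hn
  have hAB : A < B := by
    by_contra hcon
    rcases (not_lt.1 hcon).lt_or_eq with h | h
    · have := hm B A h hAn hB0
      linarith
    · rw [h] at hB0; linarith
  unfold signChanges
  rw [Set.ncard_eq_one]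
  refine ⟨(n - B, n - A), ?_⟩
  ext ⟨p, q⟩
  simp only [Set.mem_setOf_eq, Set.mem_singleton_iff, Prod.mk.injEq]
  constructor
  · rintro ⟨hpq, hqn, hneg, hz⟩
    have hz' : ∀ k, n - q < k → k < n - p → e k = 0 := by
      intro k h1 h2
      have := hz (n - k) (by omega) (by omega)
      rwa [show n - (n - k) = k by omega] at this
    rcases mul_neg_iff.1 hneg with ⟨h1, h2⟩ | ⟨h1, h2⟩
    · have ha := hAmax _ (by omega) h2
      have hb := hBmin _ h1
      have : ¬ (n - q < A) := fun hlt => by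
        have := hz' A hlt (by omega)
        linarith
      have : ¬ (B < n - p) := fun hlt => by
        have := hz' B (by omega) hlt
        linarith
      omega
    · have := hm (n - q) (n - p) (by omega) (by omega) h2
      linarith
  · rintro ⟨rfl, rfl⟩
    refine ⟨by omega, by omega, ?_, ?_⟩
    · rw [show n - (n - B) = B by omega, show n - (n - A) = A by omega]
      exact mul_neg_of_pos_of_neg hB0 hA0
    · intro l h1 h2
      have h3 : ¬ (e (n - l) < 0) := fun h => by
        have := hAmax _ (by omega) h
        omega
      have h4 : ¬ (0 < e (n - l)) := fun h => by
        have := hBmin _ h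
        omega
      exact le_antisymm (not_lt.1 h4) (not_lt.1 h3)

lemma signChanges_lc (g : Polynomial ℝ) (h : LCPoly g) (r : ℝ) (hr : 0 < r) :
    signChanges (g.natDegree + 1)
      (fun i => ((X - C r) * g).coeff (g.natDegree + 1 - i)) = 1 := by
  have hs : ∀ k, ((X - C r) * g).coeff (k + 1) = g.coeff k - r * g.coeff (k + 1) := by
    intro k; simp [sub_mul]
  have h0 : ((X - C r) * g).coeff 0 = - (r * g.coeff 0) := by simp [sub_mul]
  have hp0 := mul_pos hr (h.1 0 (by simp))
  refine signChanges_one _ (fun k => ((X - C r) * g).coeff k) ?_ ?_ ?_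
  · simp only [h0]; linarith
  · simp only [hs]
    rw [coeff_eq_zero_of_natDegree_lt (n := g.natDegree + 1) (by omega)]
    simpa using h.1 _ le_rfl
  · intro i j hij hj hi
    rcases i with _ | i
    · simp only [h0] at hi; linarith
    rcases j with _ | j
    · omega
    simp only [hs] at hi ⊢
    by_contra hcon
    push Not at hcon
    have hm := h.minor' i j (by omega)
    have hgj := h.nonneg j
    have hgi := h.nonneg (i + 1)
    have hpos : 0 < g.coeff (j + 1) := by
      by_contra hc
      have : g.coeff (j + 1) = 0 := le_antisymm (not_lt.1 hc) (h.nonneg _)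
      rw [this] at hcon
      linarith
    nlinarith [mul_pos (sub_pos.2 (sub_pos.1 hi)) hpos,
      mul_nonneg hgi (sub_nonneg.2 (sub_neg.1 hcon).le)]

/-- **Obreschkoff's theorem** (Theorem 1.2).  If a real polynomial `f` of degree `n` has a
simple positive root `r` and all of its other roots lie in the wedge
`S_{√3} = {-α + iβ : α > 0, |β| ≤ √3·α}`, then the coefficient sequence
`a₀, a₁, …, aₙ` of `f` has precisely one sign change.  (Here `aᵢ` is the coefficient of
`x^{n-i}` in `f`.) -/
theorem obreschkoff_one_sign_change
    (n : ℕ) (f : Polynomial ℝ) (r : ℝ)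
    (hf : f ≠ 0) (hdeg : f.natDegree = n)
    (hr : 0 < r)
    (hsimple : (f.map (algebraMap ℝ ℂ)).roots.count (r : ℂ) = 1)
    (hwedge : ∀ z ∈ (f.map (algebraMap ℝ ℂ)).roots, z ≠ (r : ℂ) →
      z.re < 0 ∧ |z.im| ≤ Real.sqrt 3 * (-z.re)) :
    signChanges n (fun i => f.coeff (n - i)) = 1 := by
  classical
  have hmap : f.map (algebraMap ℝ ℂ) ≠ 0 := (Polynomial.map_ne_zero_iff
    (algebraMap ℝ ℂ).injective).2 hf
  have hrmem : (r : ℂ) ∈ (f.map (algebraMap ℝ ℂ)).roots := by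
    rw [← Multiset.count_pos, hsimple]; norm_num
  have hdvd : X - C r ∣ f := by
    rw [dvd_iff_isRoot, IsRoot.def]
    have h1 := (mem_roots hmap).1 hrmem
    rw [IsRoot.def, eval_map_algebraMap] at h1
    have h2 : aeval (algebraMap ℝ ℂ r) f = 0 := h1
    rw [aeval_algebraMap_apply] at h2
    simpa using h2
  obtain ⟨g, rfl⟩ := hdvd
  have hg : g ≠ 0 := right_ne_zero_of_mul hf
  have hgmap : g.map (algebraMap ℝ ℂ) ≠ 0 := (Polynomial.map_ne_zero_iff
    (algebraMap ℝ ℂ).injective).2 hg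
  have hroots : (((X - C r) * g).map (algebraMap ℝ ℂ)).roots =
      (r : ℂ) ::ₘ (g.map (algebraMap ℝ ℂ)).roots := by
    rw [Polynomial.map_mul] at hmap ⊢
    rw [roots_mul hmap]
    simp
  have hcount : (r : ℂ) ∉ (g.map (algebraMap ℝ ℂ)).roots := by
    rw [hroots, Multiset.count_cons_self] at hsimple
    exact Multiset.count_eq_zero.1 (by omega)
  have hz : ∀ z : ℂ, aeval z g = 0 → z.re < 0 ∧ |z.im| ≤ Real.sqrt 3 * (-z.re) := by
    intro z hz
    have hmem : z ∈ (g.map (algebraMap ℝ ℂ)).roots := by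
      rw [mem_roots hgmap, IsRoot.def, eval_map_algebraMap, hz]
    refine hwedge z (by rw [hroots]; exact Multiset.mem_cons_of_mem hmem) ?_
    rintro rfl
    exact hcount hmem
  rw [natDegree_mul (X_sub_C_ne_zero _) hg, natDegree_X_sub_C, add_comm] at hdeg
  subst hdeg
  rcases lt_or_gt_of_ne (leadingCoeff_ne_zero.2 hg) with hl | hl
  · have hL := lc_of_wedge _ (-g) rfl (by rw [leadingCoeff_neg]; linarith)
      (fun z h => hz z (by simpa using h))
    have := signChanges_lc (-g) hL r hr
    simpa [signChanges] using this
  · exact signChanges_lc g (lc_of_wedge _ g rfl hl hz) r hr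
end

section
/- Let ρ ≥ 0 and λ_2, λ_3, ..., λ_n ≤ 0 be real numbers. Then there exists an n×n entrywise nonnegative real matrix whose characteristic polynomial is (x - ρ)·∏_{i=2}^n (x - λ_i) (equivalently, whose spectrum is (ρ, λ_2, ..., λ_n)) if and only if ρ + λ_2 + λ_3 + ... + λ_n ≥ 0. -/
open Polynomial

open Matrix in
theorem sul_aux (m : ℕ) (ρ : ℝ) (d : Fin m → ℝ) (hd : ∀ i, d i ≤ 0)
    (h : 0 ≤ ρ + ∑ i, d i) :
    ∃ A : Matrix (Unit ⊕ Fin m) (Unit ⊕ Fin m) ℝ, (∀ i j, 0 ≤ A i j) ∧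
      A.charpoly = (X - C ρ) * ∏ i, (X - C (d i)) := by
  let P : Matrix (Unit ⊕ Fin m) (Unit ⊕ Fin m) ℝ := fromBlocks 1 0 (of fun _ _ => 1) 1
  let Q : Matrix (Unit ⊕ Fin m) (Unit ⊕ Fin m) ℝ := fromBlocks 1 0 (of fun _ _ => -1) 1
  let T : Matrix (Unit ⊕ Fin m) (Unit ⊕ Fin m) ℝ :=
    fromBlocks (diagonal fun _ => ρ) (of fun _ j => - d j) 0 (diagonal d)
  have hQP : Q * P = 1 := by
    simp only [P, Q, fromBlocks_multiply]
    rw [← fromBlocks_one]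
    congr 1
    · simp
    · simp
    · ext i j; simp
    · simp
  refine ⟨P * (T * Q), ?_, ?_⟩
  · have hs : ∀ i, d i ≤ 0 := hd
    simp only [P, Q, T, fromBlocks_multiply]
    rintro (i | i) (j | j)
    · simp [Matrix.mul_apply]; linarith
    · simp [Matrix.mul_apply, hd]
    · simp [Matrix.mul_apply, Matrix.diagonal_apply]; linarith [hd i]
    · simp [Matrix.mul_apply, Matrix.diagonal_apply]
      split_ifs with hij
      · subst hij; simp
      · simpa using hd j
  · rw [charpoly_mul_comm, mul_assoc, hQP, mul_one, charpoly_fromBlocks_zero₂₁,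
      charpoly_diagonal, charpoly_diagonal]
    simp

/-- **Suleĭmanova's theorem** (Theorem 1.3).  Let `ρ ≥ 0` and `λ₂, …, λₙ ≤ 0` be real
numbers.  Then `(ρ, λ₂, …, λₙ)` is the spectrum of an `n × n` entrywise nonnegative
matrix (i.e. there is a nonnegative matrix with characteristic polynomial
`(x - ρ)·∏_{i=2}^n (x - λᵢ)`) if and only if `ρ + λ₂ + ⋯ + λₙ ≥ 0`. -/
theorem suleimanova
    (n : ℕ) (hn : 1 ≤ n) (ρ : ℝ) (hρ : 0 ≤ ρ) (lam : ℕ → ℝ)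
    (hlam : ∀ i ∈ Finset.Icc 2 n, lam i ≤ 0) :
    (∃ A : Matrix (Fin n) (Fin n) ℝ, (∀ i j, 0 ≤ A i j) ∧
      A.charpoly = (Polynomial.X - Polynomial.C ρ) *
        ∏ i ∈ Finset.Icc 2 n, (Polynomial.X - Polynomial.C (lam i))) ↔
    0 ≤ ρ + ∑ i ∈ Finset.Icc 2 n, lam i := by
  constructor
  · rintro ⟨A, hA, hc⟩
    have ht : A.trace = ρ + ∑ i ∈ Finset.Icc 2 n, lam i := by
      have : Nonempty (Fin n) := ⟨⟨0, hn⟩⟩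
      have hm : (∏ i ∈ Finset.Icc 2 n, (X - C (lam i))).Monic :=
        monic_prod_of_monic _ _ fun i _ => monic_X_sub_C _
      have h1 : A.charpoly.nextCoeff = -A.trace := by
        rw [A.trace_eq_neg_charpoly_nextCoeff, neg_neg]
      rw [hc, (monic_X_sub_C ρ).nextCoeff_mul hm,
        Polynomial.Monic.nextCoeff_prod _ _ fun i _ => monic_X_sub_C _] at h1
      simp at h1
      linarith
    rw [← ht]
    exact Finset.sum_nonneg fun i _ => hA i i
  · intro h
    obtain ⟨m, rfl⟩ : ∃ m, n = m + 1 := ⟨n - 1, by omega⟩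
    have hI : Finset.Icc 2 (m + 1) = (Finset.univ : Finset (Fin m)).image fun i : Fin m => (i : ℕ) + 2 := by
      ext x
      simp only [Finset.mem_Icc, Finset.mem_image, Finset.mem_univ, true_and]
      constructor
      · intro hx
        exact ⟨⟨x - 2, by omega⟩, by simp; omega⟩
      · rintro ⟨i, rfl⟩
        omega
    have hinj : Set.InjOn (fun i : Fin m => (i : ℕ) + 2) (Finset.univ : Finset (Fin m)) := by
      intro a _ b _ hab
      simp at hab
      omega
    rw [hI, Finset.sum_image hinj] at h
    obtain ⟨A, hA, hc⟩ := sul_aux m ρ (fun i => lam (i + 2))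
      (fun i => hlam _ (by simp)) h
    have e : Unit ⊕ Fin m ≃ Fin (m + 1) := Fintype.equivFinOfCardEq (by simp; omega)
    refine ⟨Matrix.reindex e e A, fun i j => hA _ _, ?_⟩
    rw [Matrix.charpoly_reindex, hc, hI, Finset.prod_image hinj]
end
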